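/- arXiv:1207.0724 — 5 statements merged into one kernel-verified Lean document; each statement's English description precedes it below -/
import Mathlib

section
/- Let L be a locally compact Hausdorff topological group and let ν : L → ℝ_{>0} be a continuous surjective group homomorphism such that: (a) ker ν equals D(L), the closure of the commutator subgroup of L; (b) the induced group isomorphism L/ker ν → ℝ_{>0} is a homeomorphism; (c) ker ν is compact. Let C denote the identity component of the center of L. Then: (i) C ∩ ker ν = {1} and L = C · ker ν, so that the multiplication map C × ker ν → L, (c,k) ↦ ck, is an isomorphism of topological groups; (ii) ν restricts to an isomorphism of topological groups C → ℝ_{>0}; (iii) ker ν equals the closure of its own commutator subgroup, i.e. D(ker ν) = ker ν. -/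
noncomputable section

/-- The multiplicative topological group of positive real numbers. -/
abbrev PosReal : Type := {x : ℝ // (0 : ℝ) < x}

/-- The identity component of the center of `L`, viewed as a subgroup of `L`. -/
def centerIdentityComponent (L : Type*) [Group L] [TopologicalSpace L] [IsTopologicalGroup L] :
    Subgroup L :=
  (Subgroup.connectedComponentOfOne ↥(Subgroup.center L)).map (Subgroup.center L).subtype

section Helpers
open MeasureTheory Filter Topology

/-- polar decomposition of a unit in a C*-algebra -/
theorem polar_unit {A : Type*} [CStarAlgebra A] (x : A) (hx : IsUnit x) :
    ∃ u ∈ unitary A, ∃ q : A, star q = q ∧ x = u * (q * q) ∧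
      ∀ y : A, Commute y (star x * x) → Commute y (q * q) := by
  let : PartialOrder A := CStarAlgebra.spectralOrder A
  let : StarOrderedRing A := CStarAlgebra.spectralOrderedRing A
  set p := CFC.abs x with hp
  have hp0 : 0 ≤ p := CFC.abs_nonneg x
  have hpp : p * p = star x * x := CFC.abs_mul_abs x
  have hps : star p = p := (IsSelfAdjoint.of_nonneg hp0).star_eq
  have hpu : IsUnit p := by
    have h1 : IsUnit (p * p) := by rw [hpp]; exact hx.star.mul hx
    exact ((Commute.refl p).isUnit_mul_iff.mp h1).1
  obtain ⟨pu, hpu⟩ := hpu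
  obtain ⟨xu, hxu⟩ := hx
  have hu : x * ↑pu⁻¹ ∈ unitary A := by
    have hpis : star (↑pu⁻¹ : A) = ↑pu⁻¹ := by
      have : star pu = pu := Units.ext (by simp [hpu, hps])
      rw [← Units.coe_star, star_inv, this]
    have h1 : star (x * ↑pu⁻¹) * (x * ↑pu⁻¹) = 1 := by
      rw [star_mul, hpis]
      calc _ = (↑pu⁻¹ : A) * (star x * x) * ↑pu⁻¹ := by simp only [mul_assoc]
        _ = (↑pu⁻¹ : A) * ((pu:A) * pu) * ↑pu⁻¹ := by rw [hpu, hpp]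
        _ = 1 := by simp [← mul_assoc]
    have hun : IsUnit (x * (↑pu⁻¹ : A)) := by
      rw [← hxu]; exact (xu * pu⁻¹).isUnit
    rw [Unitary.mem_iff]
    refine ⟨h1, ?_⟩
    obtain ⟨w, hw⟩ := hun
    rw [← hw] at h1 ⊢
    have : star (w:A) = ↑w⁻¹ := by
      rw [← mul_one (star (w:A)), ← w.mul_inv, ← mul_assoc, h1, one_mul]
    rw [this]; simp
  have hq0 := CFC.sqrt_nonneg p
  have hqq : CFC.sqrt p * CFC.sqrt p = p := CFC.sqrt_mul_sqrt_self p hp0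
  refine ⟨x * ↑pu⁻¹, hu, CFC.sqrt p, (IsSelfAdjoint.of_nonneg hq0).star_eq, ?_, ?_⟩
  · rw [hqq, ← hpu]; simp [mul_assoc]
  · intro y hy
    rw [hqq]
    have : Commute (star x * x) y := hy.symm
    exact (Commute.cfcₙ_nnreal this _).symm

theorem one_sub_sq {A : Type*} [CStarAlgebra A] (q : A) (hq : star q = q) (h : ‖q * q‖ ≤ 1) :
    ∃ r : A, star r = r ∧ 1 - q * q = r * r := by
  let : PartialOrder A := CStarAlgebra.spectralOrder A
  let : StarOrderedRing A := CStarAlgebra.spectralOrderedRing A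
  have h0 : 0 ≤ q * q := by
    have := star_mul_self_nonneg q
    rwa [hq] at this
  have h1 : q * q ≤ 1 := (CStarAlgebra.norm_le_one_iff_of_nonneg _ h0).mp h
  have h2 : 0 ≤ 1 - q * q := sub_nonneg.mpr h1
  exact ⟨CFC.sqrt (1 - q*q), (IsSelfAdjoint.of_nonneg (CFC.sqrt_nonneg _)).star_eq,
    (CFC.sqrt_mul_sqrt_self _ h2).symm⟩

/-- a faithful tracial functional -/
structure IsTr {A : Type*} [CStarAlgebra A] (τ : A →ₗ[ℂ] ℂ) : Prop where
  comm : ∀ x y, τ (x * y) = τ (y * x)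
  star' : ∀ x, τ (star x) = star (τ x)
  pos : ∀ x, x ≠ 0 → 0 < (τ (star x * x)).re

namespace IsTr
variable {A : Type*} [CStarAlgebra A] {τ : A →ₗ[ℂ] ℂ} 

theorem nonneg (h : IsTr τ) (x : A) : 0 ≤ (τ (star x * x)).re := by
  by_cases hx : x = 0
  · simp [hx]
  · exact (h.pos x hx).le

theorem dist_one (h : IsTr τ) (T : A) (hT : T ∈ unitary A) :
    (τ (star (T - 1) * (T - 1))).re = 2 * ((τ 1).re - (τ T).re) := by
  have h1 : star (T - 1) * (T - 1) = 1 + 1 - T - star T := by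
    rw [star_sub, star_one, sub_mul, mul_sub, (Unitary.mem_iff.mp hT).1]; noncomm_ring
  rw [h1]; simp [h.star']; ring

theorem re_mul_unitary_le (h : IsTr τ) (u q : A) (hu : u ∈ unitary A) (hq : star q = q) :
    (τ (u * (q * q))).re ≤ (τ (q * q)).re := by
  have h1 := h.nonneg (q * (1 - star u))
  have h2 : star (q * (1 - star u)) * (q * (1 - star u)) =
      q * q - u * (q * q) - star (u * (q * q)) + u * (q * q * star u) := by
    simp only [star_mul, star_sub, star_one, star_star, hq]; noncomm_ring
  have h3 : τ (u * (q * q * star u)) = τ (q * q) := by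
    rw [h.comm, mul_assoc, (Unitary.mem_iff.mp hu).1, mul_one]
  rw [h2] at h1
  simp only [map_add, map_sub, h3, h.star', Complex.add_re, Complex.sub_re, Complex.star_def, Complex.conj_re] at h1
  linarith

theorem bounds [FiniteDimensional ℂ A] (h : IsTr τ) : ∃ c > 0, ∃ C > 0, ∀ x : A,
    c * ‖x‖ ^ 2 ≤ (τ (star x * x)).re ∧ (τ (star x * x)).re ≤ C * ‖x‖ ^ 2 := by
  have : ProperSpace A := FiniteDimensional.proper ℂ A
  have hc : Continuous τ := τ.continuous_of_finiteDimensional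
  have hcont : Continuous fun x : A => (τ (star x * x)).re := by fun_prop
  have hK : IsCompact (Metric.sphere (0:A) 1) := isCompact_sphere 0 1
  have key : ∃ c > 0, ∃ C > 0, ∀ x ∈ Metric.sphere (0:A) 1,
    c ≤ (τ (star x * x)).re ∧ (τ (star x * x)).re ≤ C := by
    rcases (Metric.sphere (0:A) 1).eq_empty_or_nonempty with he | hne
    · exact ⟨1, one_pos, 1, one_pos, by simp [he]⟩
    · obtain ⟨x, hx, hxm⟩ := hK.exists_isMinOn hne hcont.continuousOn
      obtain ⟨y, hy, hym⟩ := hK.exists_isMaxOn hne hcont.continuousOn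
      have : ∀ z ∈ Metric.sphere (0:A) 1, z ≠ 0 := by
        rintro z hz rfl; simp at hz
      exact ⟨_, h.pos x (this x hx), _, h.pos y (this y hy), fun z hz => ⟨hxm hz, hym hz⟩⟩
  obtain ⟨c, hc0, C, hC0, hb⟩ := key
  refine ⟨c, hc0, C, hC0, fun x => ?_⟩
  by_cases hx : x = 0
  · simp [hx]
  have hn : 0 < ‖x‖ := norm_pos_iff.mpr hx
  have hs : ((‖x‖⁻¹ : ℝ) : ℂ) • x ∈ Metric.sphere (0:A) 1 := by
    simp [norm_smul, hn.ne']
  have := hb _ hs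
  have e : (τ (star (((‖x‖⁻¹ : ℝ) : ℂ) • x) * (((‖x‖⁻¹ : ℝ) : ℂ) • x))).re
      = (‖x‖⁻¹)^2 * (τ (star x * x)).re := by
    rw [star_smul, smul_mul_smul_comm, map_smul]
    simp only [Complex.star_def, Complex.conj_ofReal, smul_eq_mul]
    rw [← Complex.ofReal_mul, Complex.re_ofReal_mul]; ring
  rw [e] at this
  have h2 : 0 < ‖x‖^2 := by positivity
  have e2 : (‖x‖⁻¹)^2 * (τ (star x * x)).re = (τ (star x * x)).re / ‖x‖^2 := by
    field_simp
  rw [e2, le_div_iff₀ h2, div_le_iff₀ h2] at this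
  exact this
end IsTr

set_option linter.unusedSectionVars false

theorem norm_unitary_le {A : Type*} [CStarAlgebra A] {u : A} (hu : u ∈ unitary A) : ‖u‖ ≤ 1 := by
  rcases subsingleton_or_nontrivial A with h | h
  · rw [Subsingleton.elim u 0]; simp
  · exact (CStarRing.norm_of_mem_unitary hu).le

section avg
variable {A : Type*} [CStarAlgebra A] [FiniteDimensional ℂ A]
  {K : Type*} [Group K] [TopologicalSpace K] [IsTopologicalGroup K] [CompactSpace K]
  [MeasurableSpace K] [BorelSpace K] (μ : Measure K) [IsProbabilityMeasure μ] [μ.IsMulLeftInvariant]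

theorem cont_integrable (f : K → A) (hf : Continuous f) : Integrable f μ :=
  hf.integrable_of_hasCompactSupport (HasCompactSupport.of_compactSpace f)

theorem clm_avg {B : Type*} [NormedAddCommGroup B] [NormedSpace ℂ B] [CompleteSpace B]
    (f : K → A) (hf : Continuous f) (φ : A →L[ℂ] B) : ∫ k, φ (f k) ∂μ = φ (∫ k, f k ∂μ) :=
  φ.integral_comp_comm (cont_integrable μ f hf)

theorem avg_mul_left (f : K → A) (hf : Continuous f) (a : A) :
    ∫ k, a * f k ∂μ = a * ∫ k, f k ∂μ :=
  clm_avg μ f hf (ContinuousLinearMap.mul ℂ A a)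

theorem avg_mul_right (f : K → A) (hf : Continuous f) (a : A) :
    ∫ k, f k * a ∂μ = (∫ k, f k ∂μ) * a :=
  clm_avg μ f hf ((ContinuousLinearMap.mul ℂ A).flip a)

variable (ρ : K →* unitary A)

/-- conditional expectation on the commutant -/
noncomputable def avgE (X : A) : A := ∫ k, (ρ k : A) * X * star (ρ k : A) ∂μ

variable {ρ}

theorem cont_conj (hρ : Continuous ρ) (X : A) : Continuous fun k => (ρ k : A) * X * star (ρ k : A) := by
  have : Continuous fun k => (ρ k : A) := continuous_subtype_val.comp hρ
  fun_prop

theorem avgE_comm (hρ : Continuous ρ) (X : A) (g : K) : Commute (ρ g : A) (avgE μ ρ X) := by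
  have h1 : (ρ g : A) * avgE μ ρ X * star (ρ g : A) = avgE μ ρ X := by
    unfold avgE
    rw [← avg_mul_left μ _ (cont_conj hρ X), ← avg_mul_right]
    · conv_rhs => rw [← integral_mul_left_eq_self _ g]
      congr 1; ext k; simp [mul_assoc]
    · exact continuous_const.mul (cont_conj hρ X)
  have h2 : star (ρ g : A) * (ρ g : A) = 1 := Unitary.coe_star_mul_self _
  unfold Commute SemiconjBy
  conv_rhs => rw [← h1]
  simp only [mul_assoc, h2, mul_one]

theorem avgE_mul_left (hρ : Continuous ρ) (u X : A) (hu : ∀ k, Commute u (ρ k : A)) :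
    avgE μ ρ (u * X) = u * avgE μ ρ X := by
  unfold avgE
  rw [← avg_mul_left μ _ (cont_conj hρ X)]
  congr 1; ext k
  have := (hu k).eq
  simp only [mul_assoc]
  rw [← mul_assoc, ← this, mul_assoc]

theorem avgE_one (hρ : Continuous ρ) : avgE μ ρ 1 = 1 := by
  unfold avgE; simp

theorem avgE_norm (hρ : Continuous ρ) (X : A) : ‖avgE μ ρ X‖ ≤ ‖X‖ := by
  unfold avgE
  refine (norm_integral_le_of_norm_le_const (C := ‖X‖) (ae_of_all _ fun k => ?_)).trans (by simp)
  rw [← Unitary.coe_star, CStarRing.norm_mul_coe_unitary, CStarRing.norm_coe_unitary_mul]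

theorem avgE_sub (hρ : Continuous ρ) (X Y : A) : avgE μ ρ (X - Y) = avgE μ ρ X - avgE μ ρ Y := by
  unfold avgE
  rw [← integral_sub (cont_integrable μ _ (cont_conj hρ X)) (cont_integrable μ _ (cont_conj hρ Y))]
  congr 1; ext k; noncomm_ring

theorem avgE_tr (hρ : Continuous ρ) {τ : A →ₗ[ℂ] ℂ} (hτ : IsTr τ) (T X : A) :
    ∫ k, τ (T * ((ρ k : A) * X * star (ρ k : A))) ∂μ = τ (T * avgE μ ρ X) := by
  have := clm_avg μ _ (cont_conj hρ X)
    ((LinearMap.toContinuousLinearMap τ).comp (ContinuousLinearMap.mul ℂ A T))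
  simpa [avgE] using this

theorem tr_avgE (hρ : Continuous ρ) {τ : A →ₗ[ℂ] ℂ} (hτ : IsTr τ) (X : A) : τ (avgE μ ρ X) = τ X := by
  have := avgE_tr μ hρ hτ 1 X
  rw [one_mul] at this
  rw [← this]
  have : ∀ k, τ (1 * ((ρ k : A) * X * star (ρ k : A))) = τ X := by
    intro k
    rw [one_mul, hτ.comm, ← mul_assoc, Unitary.coe_star_mul_self, one_mul]
  simp only [this]; simp

theorem normalise (hρ : Continuous ρ) {τ : A →ₗ[ℂ] ℂ} (hτ : IsTr τ) (T : A) (hT : T ∈ unitary A) (h1 : ‖T - 1‖ < 1) :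
    ∃ u ∈ unitary A, (∀ k, Commute u (ρ k : A)) ∧ ∃ q r : A, star q = q ∧ star r = r ∧
      avgE μ ρ (u * T) = q * q ∧ 1 - q * q = r * r ∧ (τ T).re ≤ (τ (q * q)).re := by
  set P := avgE μ ρ T with hP
  have hPu : IsUnit P := by
    have : ‖1 - P‖ < 1 := by
      rw [norm_sub_rev]
      calc ‖P - 1‖ = ‖avgE μ ρ (T - 1)‖ := by rw [avgE_sub μ hρ, avgE_one μ hρ]
        _ < 1 := (avgE_norm μ hρ _).trans_lt h1
    have := isUnit_one_sub_of_norm_lt_one this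
    simpa using this
  obtain ⟨u, hu, q, hq, hx, hcomm⟩ := polar_unit P hPu
  have hPc : ∀ k, Commute (ρ k : A) P := fun k => avgE_comm μ hρ T k
  have hPs : ∀ k, Commute (ρ k : A) (star P) := by
    intro k
    have h := (hPc k⁻¹).star_star
    rwa [map_inv, ← Unitary.star_eq_inv, Unitary.coe_star, star_star] at h
  have hqc : ∀ k, Commute (ρ k : A) (q * q) := fun k => hcomm _ ((hPs k).mul_right (hPc k))
  have husP : star u * P = q * q := by
    rw [hx, ← mul_assoc, (Unitary.mem_iff.mp hu).1, one_mul]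
  have hqu : IsUnit (q * q) := by
    rw [← husP]
    exact (Units.isUnit ⟨star u, u, (Unitary.mem_iff.mp hu).1, (Unitary.mem_iff.mp hu).2⟩).mul hPu
  have huc : ∀ k, Commute u (ρ k : A) := by
    intro k
    have h1 : (ρ k : A) * u * (q * q) = u * (ρ k : A) * (q * q) := by
      rw [mul_assoc, ← hx, (hPc k).eq, mul_assoc, (hqc k).eq, ← mul_assoc, ← hx]
    exact (hqu.mul_right_cancel h1).symm
  have hsuc : ∀ k, Commute (star u) (ρ k : A) := by
    intro k
    have h := (huc k⁻¹).star_star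
    rwa [map_inv, ← Unitary.star_eq_inv, Unitary.coe_star, star_star] at h
  have hE : avgE μ ρ (star u * T) = q * q := by
    rw [avgE_mul_left μ hρ _ _ hsuc, ← hP, husP]
  have hn : ‖q * q‖ ≤ 1 := by
    rw [← hE]
    refine (avgE_norm μ hρ _).trans ?_
    exact norm_unitary_le (mul_mem (Unitary.star_mem hu) hT)
  obtain ⟨r, hr, hr2⟩ := one_sub_sq q hq hn
  refine ⟨star u, Unitary.star_mem hu, hsuc, q, r, hq, hr, hE, hr2, ?_⟩
  rw [← tr_avgE μ hρ hτ T, ← hP, hx]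
  exact hτ.re_mul_unitary_le u q hu hq

theorem subadd (μ : Measure K) [IsProbabilityMeasure μ] [μ.IsMulLeftInvariant]
    (hρ : Continuous ρ) {τ : A →ₗ[ℂ] ℂ} (hτ : IsTr τ) (T T' : A)
    (hT : T ∈ unitary A) (h1 : ‖T - 1‖ < 1) (hT' : T' ∈ unitary A) (h1' : ‖T' - 1‖ < 1) :
    ∃ u ∈ unitary A, (∀ k, Commute u (ρ k : A)) ∧ ∃ u' ∈ unitary A, (∀ k, Commute u' (ρ k : A)) ∧
    ∃ k : K, (τ T).re + (τ T').re - (τ 1).re ≤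
      (τ ((u * T) * ((ρ k : A) * (u' * T') * star (ρ k : A)))).re := by
  obtain ⟨u, hu, huc, q, r, hq, hr, hE, hqr, hle⟩ := normalise μ hρ hτ T hT h1
  obtain ⟨u', hu', huc', q', r', hq', hr', hE', hqr', hle'⟩ := normalise μ hρ hτ T' hT' h1'
  refine ⟨u, hu, huc, u', hu', huc', ?_⟩
  by_contra! hcon
  set F : K → ℂ := fun k => τ ((u * T) * ((ρ k : A) * (u' * T') * star (ρ k : A))) with hF
  have hFc : Continuous F :=
    τ.continuous_of_finiteDimensional.comp (continuous_const.mul (cont_conj hρ _))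
  have hFi : Integrable F μ :=
    hFc.integrable_of_hasCompactSupport (HasCompactSupport.of_compactSpace F)
  have hFint : ∫ k, F k ∂μ = τ ((q * q) * (q' * q')) := by
    rw [hF, avgE_tr μ hρ hτ, hE', hτ.comm, ← tr_avgE μ hρ hτ, avgE_mul_left μ hρ, hE, hτ.comm]
    intro k
    rw [← hE']
    exact (avgE_comm μ hρ _ k).symm
  have hFint2 : ∫ k, (F k).re ∂μ = (τ ((q * q) * (q' * q'))).re := by
    rw [← hFint]; exact integral_re hFi
  have hlow : (τ T).re + (τ T').re - (τ 1).re ≤ (τ ((q * q) * (q' * q'))).re := by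
    have h2 := hτ.nonneg (r * r')
    have h3 : τ (star (r * r') * (r * r')) = τ ((1 - q*q) * (1 - q' * q')) := by
      rw [hqr, hqr', star_mul, hr, hr', mul_assoc, hτ.comm]
      simp only [mul_assoc]
    have h4 : (1 - q*q) * (1 - q' * q') = 1 - q * q - q' * q' + (q * q) * (q' * q') := by
      noncomm_ring
    rw [h3, h4] at h2
    simp only [map_add, map_sub, Complex.add_re, Complex.sub_re] at h2
    linarith
  -- max of re F
  obtain ⟨k0, -, hk0⟩ := isCompact_univ.exists_isMaxOn (Set.univ_nonempty (α := K))
    (Complex.continuous_re.comp hFc).continuousOn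
  have : ∫ k, (F k).re ∂μ ≤ (F k0).re := by
    have : ∫ k, (F k).re ∂μ ≤ ∫ k, (F k0).re ∂μ :=
      integral_mono hFi.re (integrable_const _) (fun k => hk0 (Set.mem_univ k))
    simpa using this
  have := hcon k0
  simp only [hF] at *
  linarith
end avg

/-- telescoping for unitaries -/
theorem unitary_pow_sub {A : Type*} [CStarAlgebra A] {a b : A} (ha : a ∈ unitary A)
    (hb : b ∈ unitary A) (m : ℕ) : ‖a ^ m - b ^ m‖ ≤ m * ‖a - b‖ := by
  induction m with
  | zero => simp
  | succ m ih =>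
    have e : a ^ (m+1) - b ^ (m+1) = (a ^ m - b ^ m) * a + b ^ m * (a - b) := by
      rw [pow_succ, pow_succ]; noncomm_ring
    rw [e]
    refine (norm_add_le _ _).trans ?_
    rw [CStarRing.norm_mul_mem_unitary _ ha, CStarRing.norm_mem_unitary_mul _ (pow_mem hb m)]
    push_cast; linarith

theorem exp_sub_le {A : Type*} [CStarAlgebra A] (y : A) (hy : ‖y‖ = 1) :
    ∃ C : ℝ, 0 ≤ C ∧ ∃ ε > 0, ∀ s : ℝ, |s| < ε →
      ‖NormedSpace.exp (s • y) - 1 - s • y‖ ≤ C * s ^ 2 := by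
  let _ : NormedAlgebra ℚ A := NormedAlgebra.restrictScalars ℚ ℂ A
  have h := (NormedSpace.exp_hasFPowerSeriesOnBall (𝕂 := ℝ) (𝔸 := A)).hasFPowerSeriesAt
  have h2 := h.isBigO_sub_partialSum_pow 2
  have h3 := h2.bound
  obtain ⟨C, hC, hb⟩ := h2.exists_nonneg
  have hb := hb.bound
  rw [Metric.eventually_nhds_iff] at hb
  obtain ⟨ε, hε, hb⟩ := hb
  refine ⟨C, hC, ε, hε, fun s hs => ?_⟩
  have := @hb (s • y) (by simpa [norm_smul, hy] using hs)
  simpa [FormalMultilinearSeries.partialSum, Finset.sum_range_succ, NormedSpace.expSeries_apply_eq, norm_smul, hy, sub_sub] using this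

theorem main_group {A : Type*} [CStarAlgebra A] [FiniteDimensional ℂ A]
    {K : Type*} [Group K] [TopologicalSpace K] [IsTopologicalGroup K] [CompactSpace K]
    (ρ : K →* unitary A) (hρ : Continuous ρ) {τ : A →ₗ[ℂ] ℂ} (hτ : IsTr τ)
    (G : ℝ → Set A) (hGu : ∀ t, G t ⊆ unitary A)
    (hGc : IsClosed {p : ℝ × A | p.2 ∈ G p.1})
    (hGm : ∀ s t x y, x ∈ G s → y ∈ G t → x * y ∈ G (s + t))
    (hGs : ∀ t x, x ∈ G t → star x ∈ G (-t))
    (hGn : ∀ t, (G t).Nonempty)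
    (hGρ : ∀ k, (ρ k : A) ∈ G 0)
    (hGcomm : ∀ u ∈ unitary A, (∀ k, Commute u (ρ k : A)) → u ∈ G 0) :
    ∀ t, (1 : A) ∈ G t := by
  have hpr : ProperSpace A := FiniteDimensional.proper ℂ A
  let _ : MeasurableSpace K := borel K
  have : BorelSpace K := ⟨rfl⟩
  let μ : Measure K := Measure.haarMeasure ⊤
  have hμp : IsProbabilityMeasure μ := ⟨by
    have := Measure.haarMeasure_self (K₀ := (⊤ : TopologicalSpace.PositiveCompacts K))
    simpa using this⟩
  have hτc : Continuous τ := τ.continuous_of_finiteDimensional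
  -- sequential compactness of unitaries
  have hseq : ∀ (x : ℕ → A), (∀ n, x n ∈ unitary A) → ∃ a, ∃ φ : ℕ → ℕ, StrictMono φ ∧
      Tendsto (x ∘ φ) atTop (𝓝 a) := by
    intro x hx
    have hb : ∀ n, x n ∈ Metric.closedBall (0:A) 1 := fun n => by
      simpa using norm_unitary_le (hx n)
    obtain ⟨a, -, φ, h1, h2⟩ := (isCompact_closedBall (0:A) 1).tendsto_subseq hb
    exact ⟨a, φ, h1, h2⟩
  have hGt : ∀ t, IsClosed (G t) := fun t =>
    hGc.preimage (Continuous.prodMk_right t)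
  have hGk : ∀ t, IsCompact (G t) := fun t =>
    (isCompact_closedBall (0:A) 1).of_isClosed_subset (hGt t) (fun x hx => by
      simpa using norm_unitary_le (hGu t hx))
  have hlim : ∀ (s : ℕ → ℝ) (x : ℕ → A) (s0 : ℝ) (x0 : A), (∀ n, x n ∈ G (s n)) →
      Tendsto s atTop (𝓝 s0) → Tendsto x atTop (𝓝 x0) → x0 ∈ G s0 := by
    intro s x s0 x0 hx hs hxl
    exact hGc.mem_of_tendsto (hs.prodMk_nhds hxl) (Eventually.of_forall hx)
  have hone : (1:A) ∈ G 0 := hGcomm 1 (one_mem _) (fun k => Commute.one_left _)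
  have hGpow : ∀ t x (n : ℕ), x ∈ G t → x ^ n ∈ G (n * t) := by
    intro t x n hx
    induction n with
    | zero => simpa using hone
    | succ n ih =>
      have := hGm _ _ _ _ ih hx
      rw [← pow_succ] at this
      convert this using 2
      push_cast; ring
  have hmax : ∀ t, ∃ T ∈ G t, ∀ S ∈ G t, (τ S).re ≤ (τ T).re := by
    intro t
    obtain ⟨T, hT, hTm⟩ := (hGk t).exists_isMaxOn (hGn t)
      (Complex.continuous_re.comp hτc).continuousOn
    exact ⟨T, hT, fun S hS => hTm hS⟩
  choose m hm hmm using hmax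
  obtain ⟨c, hc0, C, hC0, hbd⟩ := hτ.bounds
  set f : ℝ → ℝ := fun t => (τ 1).re - (τ (m t)).re with hf
  have hf2 : ∀ t, (τ (star (m t - 1) * (m t - 1))).re = 2 * f t := fun t =>
    hτ.dist_one _ (hGu t (hm t))
  have hflow : ∀ t, c * ‖m t - 1‖^2 ≤ 2 * f t := fun t => by
    rw [← hf2]; exact (hbd _).1
  have hfle : ∀ t, ∀ S ∈ G t, 2 * f t ≤ C * ‖S - 1‖^2 := by
    intro t S hS
    refine le_trans ?_ (hbd _).2
    rw [hτ.dist_one S (hGu t hS)]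
    have := hmm t S hS
    simp only [hf]; linarith
  have hf0 : ∀ t, 0 ≤ f t := fun t => by
    have := hflow t
    have : 0 ≤ c * ‖m t - 1‖^2 := by positivity
    linarith
  have hfzero : ∀ t, f t = 0 → (1:A) ∈ G t := by
    intro t ht
    have h1 := hflow t
    rw [ht, mul_zero] at h1
    have h2 : ‖m t - 1‖^2 = 0 := le_antisymm (by
      by_contra! h
      have := mul_pos hc0 h
      linarith) (by positivity)
    have h3 : m t = 1 := by
      rw [pow_eq_zero_iff two_ne_zero, norm_eq_zero, sub_eq_zero] at h2
      exact h2
    rw [← h3]; exact hm t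
  -- Claim A
  have claimA : ∀ s : ℕ → ℝ, Tendsto s atTop (𝓝 0) → ∃ φ : ℕ → ℕ, StrictMono φ ∧
      Tendsto (fun n => f (s (φ n))) atTop (𝓝 0) := by
    intro s hs
    obtain ⟨a, φ, hφ, ha⟩ := hseq (fun n => m (s n)) (fun n => hGu _ (hm _))
    refine ⟨φ, hφ, ?_⟩
    have haG : a ∈ G 0 := hlim (s ∘ φ) _ 0 a (fun n => hm _) (hs.comp hφ.tendsto_atTop) ha
    have hsa : star a ∈ G 0 := by simpa using hGs 0 a haG
    have hb : ∀ n, 2 * f (s (φ n)) ≤ C * ‖m (s (φ n)) * star a - 1‖^2 := by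
      intro n
      apply hfle
      simpa using hGm _ _ _ _ (hm (s (φ n))) hsa
    have hlim2 : Tendsto (fun n => C * ‖m (s (φ n)) * star a - 1‖^2) atTop (𝓝 0) := by
      have h1 : Tendsto (fun n => C * ‖m (s (φ n)) * star a - 1‖^2) atTop
          (𝓝 (C * ‖a * star a - 1‖^2)) :=
        (((ha.mul_const (star a)).sub_const 1).norm.pow 2).const_mul C
      have h2 : a * star a = 1 := (Unitary.mem_iff.mp (hGu _ haG)).2
      simpa [h2] using h1
    refine squeeze_zero (fun n => hf0 _) (fun n => ?_) hlim2
    have := hb n; have := hf0 (s (φ n)); linarith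
  have claimA' : ∀ ε > 0, ∃ δ > 0, ∀ t, |t| < δ → f t < ε := by
    intro ε hε
    by_contra! hcon
    have : ∀ n : ℕ, ∃ t : ℝ, |t| < 1 / ((n:ℝ) + 1) ∧ ε ≤ f t := fun n =>
      hcon _ (by positivity)
    choose s hs1 hs2 using this
    have hs : Tendsto s atTop (𝓝 0) :=
      squeeze_zero_norm (fun n => (hs1 n).le) tendsto_one_div_add_atTop_nhds_zero_nat
    obtain ⟨φ, -, h⟩ := claimA s hs
    have := ge_of_tendsto' h (fun n => hs2 _)
    linarith
  -- Claim C
  have claimC : ∃ M δ : ℝ, 0 < δ ∧ 0 ≤ M ∧ ∀ t, |t| < δ → f t ≤ M * t^2 := by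
    by_contra! hcon
    have : ∀ n : ℕ, ∃ t : ℝ, |t| < 1 / ((n:ℝ) + 1) ∧ ((n:ℝ)+1) * t^2 < f t := fun n =>
      hcon ((n:ℝ)+1) _ (by positivity) (by positivity)
    choose s hs1 hs2 using this
    have hs : Tendsto s atTop (𝓝 0) :=
      squeeze_zero_norm (fun n => (hs1 n).le) tendsto_one_div_add_atTop_nhds_zero_nat
    obtain ⟨φ, hφ, hfφ⟩ := claimA s hs
    -- the unit vectors
    set a : ℕ → ℝ := fun n => ‖m (s n) - 1‖ with ha
    have hapos : ∀ n, 0 < a n := by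
      intro n
      have h1 : 0 < f (s n) := lt_of_le_of_lt (by positivity) (hs2 n)
      have h2 := hfle _ _ (hm (s n))
      by_contra! h
      have h3 : a n = 0 := le_antisymm h (norm_nonneg _)
      rw [show ‖m (s n) - 1‖ = 0 from h3] at h2
      simp at h2; linarith
    have haφ : Tendsto (fun n => a (φ n)) atTop (𝓝 0) := by
      have h1 : Tendsto (fun n => (a (φ n))^2) atTop (𝓝 0) := by
        have h2 : Tendsto (fun n => 2 / c * f (s (φ n))) atTop (𝓝 0) := by
          simpa using hfφ.const_mul (2/c)
        refine squeeze_zero (fun n => by positivity) (fun n => ?_) h2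
        have := hflow (s (φ n))
        rw [div_mul_eq_mul_div, le_div_iff₀ hc0]; linarith
      have h3 := h1.sqrt
      simpa [Real.sqrt_sq (hapos _).le] using h3
    have hratio : Tendsto (fun n => s n / a n) atTop (𝓝 0) := by
      have h1 : ∀ n : ℕ, (s n / a n)^2 ≤ C * (1 / ((n:ℝ) + 1)) := by
        intro n
        have h2 := hfle _ _ (hm (s n))
        have h3 := hs2 n
        have hn' : (0:ℝ) < (n:ℝ) + 1 := by positivity
        have := hf0 (s n)
        have h4 := hapos n
        rw [div_pow, mul_one_div, div_le_div_iff₀ (by positivity) hn']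
        change 2 * f (s n) ≤ C * (a n)^2 at h2
        nlinarith
      have h2 : Tendsto (fun n => (s n / a n)^2) atTop (𝓝 0) := by
        refine squeeze_zero (fun n => by positivity) h1 ?_
        simpa using (tendsto_one_div_add_atTop_nhds_zero_nat (𝕜 := ℝ)).const_mul C
      have h3 := h2.sqrt
      simp only [Real.sqrt_sq_eq_abs, Real.sqrt_zero] at h3
      exact (tendsto_zero_iff_abs_tendsto_zero _).mpr h3
    -- limit direction
    have hYn : ∀ n, ‖(a (φ n))⁻¹ • (m (s (φ n)) - 1)‖ = 1 := by
      intro n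
      rw [norm_smul, norm_inv, Real.norm_of_nonneg (hapos _).le]
      exact inv_mul_cancel₀ (hapos _).ne'
    obtain ⟨Y, -, χ, hχ, hY⟩ := (isCompact_closedBall (0:A) 1).tendsto_subseq
      (x := fun n => (a (φ n))⁻¹ • (m (s (φ n)) - 1)) (fun n => by simpa using (hYn n).le)
    set T : ℕ → A := fun n => m (s (φ (χ n))) with hT
    set b : ℕ → ℝ := fun n => a (φ (χ n)) with hb
    set σ : ℕ → ℝ := fun n => s (φ (χ n)) with hσ
    set y : ℕ → A := fun n => (b n)⁻¹ • (T n - 1) with hy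
    have hyY : Tendsto y atTop (𝓝 Y) := hY
    have hbpos : ∀ n, 0 < b n := fun n => hapos _
    have hb0 : Tendsto b atTop (𝓝 0) := haφ.comp hχ.tendsto_atTop
    have hr0 : Tendsto (fun n => σ n / b n) atTop (𝓝 0) :=
      hratio.comp (hφ.tendsto_atTop.comp hχ.tendsto_atTop)
    have hTy : ∀ n, T n = 1 + b n • y n := by
      intro n; simp only [hy]; rw [smul_smul, mul_inv_cancel₀ (hbpos n).ne']; simp
    have hTG : ∀ n, T n ∈ G (σ n) := fun n => hm _
    have hYnorm : ‖Y‖ = 1 := by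
      refine tendsto_nhds_unique hyY.norm ?_
      have : ∀ n, ‖y n‖ = 1 := fun n => hYn (χ n)
      simp [this]
    have hskew : star Y = - Y := by
      have h1 : ∀ n, star (y n) + y n = - (b n • (star (y n) * y n)) := by
        intro n
        have h2 := (Unitary.mem_iff.mp (hGu _ (hTG n))).1
        rw [hTy n] at h2
        have h3 : b n • (star (y n) + y n + b n • (star (y n) * y n)) = 0 := by
          have h4 : star (1 + b n • y n) * (1 + b n • y n) =
            1 + b n • (star (y n) + y n + b n • (star (y n) * y n)) := by
            simp only [star_add, star_one, star_smul, star_trivial, add_mul, mul_add, one_mul,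
              mul_one, smul_mul_assoc, mul_smul_comm, smul_add]
            abel
          rw [h4] at h2
          simpa using h2
        have h5 := (smul_eq_zero_iff_right (hbpos n).ne').mp h3
        exact eq_neg_of_add_eq_zero_left h5
      have h2 : Tendsto (fun n => star (y n) + y n) atTop (𝓝 (star Y + Y)) := hyY.star.add hyY
      have h3 : Tendsto (fun n => - (b n • (star (y n) * y n))) atTop
        (𝓝 (- ((0:ℝ) • (star Y * Y)))) := (hb0.smul (hyY.star.mul hyY)).neg
      simp only [h1] at h2
      have := tendsto_nhds_unique h2 h3
      rw [zero_smul, neg_zero] at this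
      exact eq_neg_of_add_eq_zero_left this
    let _ : NormedAlgebra ℚ A := NormedAlgebra.restrictScalars ℚ ℂ A
    have hexpU : ∀ r : ℝ, NormedSpace.exp (r • Y) ∈ unitary A := by
      intro r
      apply NormedSpace.exp_mem_unitary_of_mem_skewAdjoint
      rw [skewAdjoint.mem_iff, star_smul, hskew]; simp
    obtain ⟨D, hD0, ε, hε, hD⟩ := exp_sub_le Y hYnorm
    have hclose : ∀ᶠ n in atTop, ‖T n - NormedSpace.exp (b n • Y)‖ ≤ b n * (‖y n - Y‖ + D * b n) := by
      filter_upwards [hb0.eventually (gt_mem_nhds hε)] with n hn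
      have h1 := hD (b n) (by rwa [abs_of_pos (hbpos n)])
      have h2 : T n - NormedSpace.exp (b n • Y) =
        b n • (y n - Y) - (NormedSpace.exp (b n • Y) - 1 - b n • Y) := by
        rw [hTy n, smul_sub]; abel
      rw [h2]
      refine (norm_sub_le _ _).trans ?_
      rw [norm_smul, Real.norm_of_nonneg (hbpos n).le]
      nlinarith
    have herr : Tendsto (fun n => ‖y n - Y‖ + D * b n) atTop (𝓝 0) := by
      have h1 := (hyY.sub_const Y).norm.add (hb0.const_mul D)
      simpa using h1
    have hexpG : ∀ r : ℝ, 0 ≤ r → NormedSpace.exp (r • Y) ∈ G 0 := by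
      intro r hr
      set N : ℕ → ℕ := fun n => ⌊r / b n⌋₊ with hN
      have hNle : ∀ n, (N n : ℝ) * b n ≤ r := fun n => by
        have := Nat.floor_le (div_nonneg hr (hbpos n).le)
        rwa [le_div_iff₀ (hbpos n)] at this
      have hNge : ∀ n, r - b n ≤ (N n : ℝ) * b n := fun n => by
        have := (Nat.lt_floor_add_one (r / b n)).le
        rw [div_le_iff₀ (hbpos n)] at this
        change r ≤ ((N n : ℝ) + 1) * b n at this
        linarith
      have hNb : Tendsto (fun n => (N n : ℝ) * b n) atTop (𝓝 r) := by
        refine tendsto_of_tendsto_of_tendsto_of_le_of_le ?_ tendsto_const_nhds hNge hNle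
        simpa using hb0.const_sub r
      have hNs : Tendsto (fun n => (N n : ℝ) * σ n) atTop (𝓝 0) := by
        have h1 := hNb.mul hr0
        rw [mul_zero] at h1
        refine h1.congr (fun n => ?_)
        have := (hbpos n).ne'
        field_simp
      refine hlim (fun n => N n * σ n) (fun n => T n ^ N n) 0 _ (fun n => hGpow _ _ _ (hTG n)) hNs ?_
      have h2 : Tendsto (fun n => NormedSpace.exp (((N n : ℝ) * b n) • Y)) atTop
          (𝓝 (NormedSpace.exp (r • Y))) :=
        (NormedSpace.exp_continuous.tendsto _).comp (hNb.smul_const Y)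
      have h3 : Tendsto (fun n => T n ^ N n - NormedSpace.exp (((N n : ℝ) * b n) • Y)) atTop (𝓝 0) := by
        have h4 : Tendsto (fun n => r * (‖y n - Y‖ + D * b n)) atTop (𝓝 0) := by
          simpa using herr.const_mul r
        refine squeeze_zero_norm' ?_ h4
        filter_upwards [hclose] with n hn
        have e : NormedSpace.exp (((N n : ℝ) * b n) • Y) = (NormedSpace.exp (b n • Y)) ^ N n := by
          rw [← NormedSpace.exp_nsmul, mul_smul, Nat.cast_smul_eq_nsmul]
        rw [e]
        refine (unitary_pow_sub (hGu _ (hTG n)) (hexpU _) _).trans ?_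
        have h5 : 0 ≤ ‖y n - Y‖ + D * b n := by have := (hbpos n).le; positivity
        calc (N n : ℝ) * ‖T n - NormedSpace.exp (b n • Y)‖ 
            ≤ N n * (b n * (‖y n - Y‖ + D * b n)) := by gcongr
          _ = (N n * b n) * (‖y n - Y‖ + D * b n) := by ring
          _ ≤ r * (‖y n - Y‖ + D * b n) := by gcongr; exact hNle n
      simpa using h3.add h2
    -- contradiction
    have hfin : ∀ᶠ n in atTop, c * (b n)^2 ≤ C * (b n * (‖y n - Y‖ + D * b n))^2 := by
      filter_upwards [hclose] with n hn
      have h1 : T n * star (NormedSpace.exp (b n • Y)) ∈ G (σ n) := by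
        have h2 := hGs _ _ (hexpG (b n) (hbpos n).le)
        simpa using hGm _ _ _ _ (hTG n) h2
      have h3 := hfle _ _ h1
      have h4 := hflow (σ n)
      have h5 : ‖T n * star (NormedSpace.exp (b n • Y)) - 1‖ = ‖T n - NormedSpace.exp (b n • Y)‖ := by
        rw [← CStarRing.norm_mul_mem_unitary (T n - _) (Unitary.star_mem (hexpU (b n))), sub_mul,
          (Unitary.mem_iff.mp (hexpU (b n))).2]
      rw [h5] at h3
      calc c * (b n)^2 ≤ 2 * f (σ n) := h4
        _ ≤ _ := h3
        _ ≤ _ := by gcongr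
    have hfin2 : ∀ᶠ n in atTop, c ≤ C * (‖y n - Y‖ + D * b n)^2 := by
      filter_upwards [hfin] with n hn
      have h1 : 0 < (b n)^2 := by have := hbpos n; positivity
      by_contra! h
      have := mul_lt_mul_of_pos_right h h1
      nlinarith
    have hz : Tendsto (fun n => C * (‖y n - Y‖ + D * b n)^2) atTop (𝓝 0) := by
      simpa using (herr.pow 2).const_mul C
    have := ge_of_tendsto hz hfin2
    linarith
  -- conclusion
  obtain ⟨M, δ1, hδ1, hM, hfM⟩ := claimC
  obtain ⟨δ2, hδ2, hfε⟩ := claimA' (c / 2) (by positivity)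
  have hsmall : ∀ t, |t| < δ2 → ‖m t - 1‖ < 1 := by
    intro t ht
    have h1 := hflow t
    have h2 := hfε t ht
    have h3 : ‖m t - 1‖^2 < 1 := by nlinarith
    exact (sq_lt_one_iff₀ (norm_nonneg _)).mp h3
  have hsub : ∀ s t, |s| < δ2 → |t| < δ2 → f (s + t) ≤ f s + f t := by
    intro s t hs ht
    obtain ⟨u, hu, huc, u', hu', huc', k, hk⟩ := subadd μ hρ hτ (m s) (m t) (hGu _ (hm s))
      (hsmall s hs) (hGu _ (hm t)) (hsmall t ht)
    have hG1 : (u * m s) * ((ρ k : A) * (u' * m t) * star (ρ k : A)) ∈ G (s + t) := by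
      have h1 := hGm _ _ _ _ (hGcomm u hu huc) (hm s)
      have h2 := hGm _ _ _ _ (hGcomm u' hu' huc') (hm t)
      have h3 := hGm _ _ _ _ (hGm _ _ _ _ (hGρ k) h2) (hGs _ _ (hGρ k))
      have h4 := hGm _ _ _ _ h1 h3
      simpa using h4
    have := hmm _ _ hG1
    simp only [hf]; linarith
  have hlocal : ∀ t, |t| < min δ1 δ2 → f t = 0 := by
    intro t ht
    have ht1 := ht.trans_le (min_le_left _ _)
    have ht2 := ht.trans_le (min_le_right _ _)
    have hf00 : f 0 = 0 := by
      have := hfle 0 1 hone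
      simp at this
      exact le_antisymm (by linarith) (hf0 0)
    have hind : ∀ n : ℕ, ∀ j : ℕ, j ≤ n → f (j * (t / n)) ≤ j * f (t / n) := by
      intro n j
      rcases Nat.eq_zero_or_pos n with rfl | hn
      · intro hj; obtain rfl : j = 0 := by omega
        simp [hf00]
      have hn' : (0:ℝ) < n := by exact_mod_cast hn
      have hn1 : (1:ℝ) ≤ n := by exact_mod_cast hn
      have hle : ∀ j : ℕ, j ≤ n → |(j:ℝ) * (t / n)| < δ2 := by
        intro j hj
        have hj' : (j:ℝ) ≤ n := by exact_mod_cast hj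
        rw [abs_mul, abs_div, Nat.abs_cast, Nat.abs_cast]
        calc (j:ℝ) * (|t| / n) ≤ n * (|t| / n) := by gcongr
          _ = |t| := by field_simp
          _ < δ2 := ht2
      induction j with
      | zero => intro _; simp [hf00]
      | succ j ih =>
        intro hj
        have h1 := hsub _ _ (hle j (by omega)) (by simpa using hle 1 hn)
        have h2 := ih (by omega)
        have e : ((j + 1 : ℕ) : ℝ) * (t / n) = j * (t / n) + t / n := by push_cast; ring
        rw [e]; push_cast; linarith
    have hbound : ∀ n : ℕ, f t ≤ M * t^2 * (1 / ((n:ℝ) + 1)) := by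
      intro n
      have h1 := hind (n+1) (n+1) le_rfl
      have hn : (0:ℝ) < (n:ℝ) + 1 := by positivity
      have h2 : |t / ((n:ℝ)+1)| < δ1 := by
        rw [abs_div, abs_of_pos hn]
        refine lt_of_le_of_lt (div_le_self (abs_nonneg t) ?_) ht1
        linarith [Nat.cast_nonneg (α := ℝ) n]
      have h3 := hfM _ h2
      push_cast at h1
      rw [mul_div_cancel₀ _ hn.ne'] at h1
      calc f t ≤ ((n:ℝ)+1) * f (t / ((n:ℝ)+1)) := h1
        _ ≤ ((n:ℝ)+1) * (M * (t / ((n:ℝ)+1))^2) := by gcongr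
        _ = _ := by field_simp
    have hz : Tendsto (fun n : ℕ => M * t^2 * (1 / ((n:ℝ) + 1))) atTop (𝓝 0) := by
      simpa using (tendsto_one_div_add_atTop_nhds_zero_nat (𝕜 := ℝ)).const_mul (M * t^2)
    exact le_antisymm (ge_of_tendsto' hz hbound) (hf0 t)
  intro t
  obtain ⟨n, hn⟩ := exists_nat_gt (|t| / min δ1 δ2)
  have hδ : 0 < min δ1 δ2 := lt_min hδ1 hδ2
  have hn0 : (0:ℝ) < n := lt_of_le_of_lt (by positivity) hn
  have h1 : |t / n| < min δ1 δ2 := by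
    rw [abs_div, Nat.abs_cast, div_lt_iff₀ hn0]
    rw [div_lt_iff₀ hδ] at hn; linarith
  have h2 := hGpow _ _ n (hfzero _ (hlocal _ h1))
  rw [one_pow, mul_div_cancel₀ _ hn0.ne'] at h2
  exact h2

/-- the kernel of all finite dimensional unitary representations -/
def RepTrivial {K : Type*} [Group K] [TopologicalSpace K] (k : K) : Prop :=
  ∀ (n : ℕ) (ρ : K →* unitary (Matrix (Fin n) (Fin n) ℂ)), Continuous ρ → ρ k = 1

theorem rep_of_invariant {K : Type*} [Group K] [TopologicalSpace K] {H : Type*}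
    [NormedAddCommGroup H] [InnerProductSpace ℂ H] (U : K →* (H ≃ₗᵢ[ℂ] H))
    (hU : ∀ v, Continuous fun g => U g v) (V : Submodule ℂ H) [FiniteDimensional ℂ V]
    (hV : ∀ g, ∀ v ∈ V, U g v ∈ V) (k0 : K) (hk : RepTrivial k0) (v : H) (hv : v ∈ V) :
    U k0 v = v := by
  let e := stdOrthonormalBasis ℂ V
  let n := Module.finrank ℂ V
  let M : K → Matrix (Fin n) (Fin n) ℂ := fun g => Matrix.of fun i j => inner ℂ (e i : H) (U g (e j))
  have hexp : ∀ w ∈ V, ∑ i, inner ℂ (e i : H) w • (e i : H) = w := by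
    intro w hw
    have := congrArg (Subtype.val) (e.sum_repr' ⟨w, hw⟩)
    simpa using this
  have hmul : ∀ g h, M (g * h) = M g * M h := by
    intro g h
    ext i j
    simp only [M, Matrix.of_apply, Matrix.mul_apply]
    have h1 := hexp (U h (e j)) (hV h _ (e j).2)
    rw [map_mul]
    change inner ℂ (e i : H) (U g (U h (e j))) = _
    conv_lhs => rw [← h1]
    rw [map_sum, inner_sum]
    refine Finset.sum_congr rfl fun l _ => ?_
    rw [map_smul, inner_smul_right, mul_comm]
  have hone : M 1 = 1 := by
    ext i j
    have h2 := orthonormal_iff_ite.mp e.orthonormal i j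
    simp only [M, Matrix.of_apply, map_one, Matrix.one_apply]
    rw [← h2]; rfl
  have hstar : ∀ g, star (M g) = M g⁻¹ := by
    intro g
    ext i j
    simp only [M, Matrix.star_apply, Matrix.of_apply]
    rw [← (U g⁻¹).inner_map_map (e j : H)]
    have : U g⁻¹ (U g (e i : H)) = e i := by
      change (U g⁻¹ * U g) (e i : H) = _
      rw [← map_mul]; simp
    rw [this]
    exact inner_conj_symm _ _
  let ρ : K →* unitary (Matrix (Fin n) (Fin n) ℂ) :=
    { toFun := fun g => ⟨M g, by
        rw [Unitary.mem_iff, hstar, ← hmul, ← hmul]; simp [hone]⟩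
      map_one' := Subtype.ext hone
      map_mul' := fun g h => Subtype.ext (hmul g h) }
  have hc : Continuous ρ := by
    refine Continuous.subtype_mk ?_ _
    refine continuous_matrix fun i j => ?_
    exact continuous_const.inner (hU _)
  have hk1 := congrArg Subtype.val (hk n ρ hc)
  have hk2 : M k0 = 1 := hk1
  have hej : ∀ j, U k0 (e j : H) = e j := by
    intro j
    rw [← hexp _ (hV k0 _ (e j).2)]
    have h3 : ∀ i, inner ℂ (e i : H) (U k0 (e j)) = if i = j then 1 else 0 := by
      intro i
      have := congrFun (congrFun hk2 i) j
      simpa [M, Matrix.one_apply] using this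
    simp [h3]
  rw [← hexp v hv, map_sum]
  refine Finset.sum_congr rfl fun l _ => ?_
  rw [map_smul, hej]

theorem spectral_trivial {K : Type*} [Group K] [TopologicalSpace K] {H : Type*}
    [NormedAddCommGroup H] [InnerProductSpace ℂ H] [CompleteSpace H] (U : K →* (H ≃ₗᵢ[ℂ] H))
    (hU : ∀ v, Continuous fun g => U g v) (R : H →L[ℂ] H) (hR : IsCompactOperator R)
    (hRs : R.toLinearMap.IsSymmetric) (hcomm : ∀ g v, R (U g v) = U g (R v))
    (k0 : K) (hk : RepTrivial k0) (v : H) : R (U k0 v) = R v := by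
  let D : H →L[ℂ] H := R.comp ((U k0).toContinuousLinearEquiv.toContinuousLinearMap - ContinuousLinearMap.id ℂ H)
  have hD : ∀ w, D w = R (U k0 w) - R w := fun w => by simp [D]
  have key : (⨆ μ, Module.End.eigenspace R.toLinearMap μ) ≤ LinearMap.ker D.toLinearMap := by
    refine iSup_le fun μ w hw => ?_
    have hw' : R w = μ • w := Module.End.mem_eigenspace_iff.mp hw
    rw [LinearMap.mem_ker]
    change D w = 0
    rw [hD, hcomm, hw', map_smul]
    by_cases hμ : μ = 0
    · simp [hμ]
    · have := ContinuousLinearMap.finite_dimensional_eigenspace hR μ hμ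
      rw [rep_of_invariant U hU (Module.End.eigenspace R.toLinearMap μ) ?_ k0 hk w hw, sub_self]
      intro g x hx
      have hx' : R x = μ • x := Module.End.mem_eigenspace_iff.mp hx
      refine Module.End.mem_eigenspace_iff.mpr ?_
      change R (U g x) = _
      rw [hcomm, hx', map_smul]
  have hcl : IsClosed (LinearMap.ker D.toLinearMap : Set H) := D.isClosed_ker
  have htop : (⨆ μ, Module.End.eigenspace R.toLinearMap μ).topologicalClosure = ⊤ := by
    rw [Submodule.topologicalClosure_eq_top_iff]
    exact ContinuousLinearMap.orthogonalComplement_iSup_eigenspaces_eq_bot hR hRs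
  have h4 := Submodule.topologicalClosure_minimal _ key hcl
  rw [htop] at h4
  have h5 : D v = 0 := h4 (Submodule.mem_top (x := v))
  rw [hD] at h5
  exact sub_eq_zero.mp h5

theorem abstract_pw {K : Type*} [Group K] [TopologicalSpace K] [IsTopologicalGroup K]
    [CompactSpace K] {H : Type*}
    [NormedAddCommGroup H] [InnerProductSpace ℂ H] [CompleteSpace H] (U : K →* (H ≃ₗᵢ[ℂ] H))
    (hU : ∀ v, Continuous fun g => U g v) (J : (BoundedContinuousFunction K ℂ) →L[ℂ] H)
    (hJ : Function.Injective J)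
    (hJU : ∀ g (f f' : BoundedContinuousFunction K ℂ), (∀ x, f' x = f (g⁻¹ * x)) → J f' = U g (J f))
    (k0 : K) (hk : RepTrivial k0) (φ0 : H) : U k0 φ0 = φ0 := by
  let S0 : H → BoundedContinuousFunction K ℂ := fun φ =>
    BoundedContinuousFunction.mkOfCompact ⟨fun x => inner ℂ (U x φ0) φ, (hU φ0).inner continuous_const⟩
  have hS0 : ∀ φ x, S0 φ x = inner ℂ (U x φ0) φ := fun _ _ => rfl
  let S : H →L[ℂ] BoundedContinuousFunction K ℂ := LinearMap.mkContinuous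
    { toFun := S0
      map_add' := fun a b => by ext x; exact inner_add_right _ _ _
      map_smul' := fun c a => by ext x; exact inner_smul_right _ _ _ } ‖φ0‖ (by
        intro φ
        refine (BoundedContinuousFunction.norm_le (by positivity)).mpr fun x => ?_
        change ‖S0 φ x‖ ≤ _
        rw [hS0]
        refine (norm_inner_le_norm _ _).trans ?_
        simp)
  have hS : ∀ φ x, S φ x = inner ℂ (U x φ0) φ := fun _ _ => rfl
  have hSc : IsCompactOperator S := by
    rw [isCompactOperator_iff_exists_mem_nhds_isCompact_closure_image]
    refine ⟨Metric.closedBall 0 1, Metric.closedBall_mem_nhds _ one_pos, ?_⟩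
    refine BoundedContinuousFunction.arzela_ascoli (Metric.closedBall 0 ‖φ0‖)
      (isCompact_closedBall _ _) _ ?_ ?_
    · rintro f x ⟨φ, hφ, rfl⟩
      rw [mem_closedBall_zero_iff, hS]
      rw [mem_closedBall_zero_iff] at hφ
      refine (norm_inner_le_norm _ _).trans ?_
      simp only [LinearIsometryEquiv.norm_map]
      nlinarith [norm_nonneg φ0]
    · intro x0
      rw [Metric.equicontinuousAt_iff_right]
      intro ε hε
      have h1 := (hU φ0).tendsto x0
      have h2 := Metric.tendsto_nhds.mp h1 ε hε
      filter_upwards [h2] with x hx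
      rintro ⟨f, φ, hφ, rfl⟩
      rw [mem_closedBall_zero_iff] at hφ
      change dist (S φ x0) (S φ x) < ε
      rw [hS, hS, dist_eq_norm, ← inner_sub_left]
      refine (norm_inner_le_norm _ _).trans_lt ?_
      rw [dist_comm, dist_eq_norm] at hx
      nlinarith [norm_nonneg (U x0 φ0 - U x φ0), norm_nonneg φ]
  let B : H →L[ℂ] H := J.comp S
  have hB : ∀ g v, B (U g v) = U g (B v) := by
    intro g v
    refine hJU g (S v) _ fun x => ?_
    change inner ℂ (U x φ0) (U g v) = inner ℂ (U (g⁻¹ * x) φ0) v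
    rw [map_mul]
    change _ = inner ℂ (U g⁻¹ (U x φ0)) v
    rw [← (U g).inner_map_map (U g⁻¹ (U x φ0))]
    congr 1
    change _ = (U g * U g⁻¹) (U x φ0)
    rw [← map_mul]; simp
  let R : H →L[ℂ] H := (ContinuousLinearMap.adjoint B).comp B
  have hR1 : ∀ v w, inner ℂ (R v) w = inner ℂ (B v) (B w) := fun v w => by
    simp [R, ContinuousLinearMap.adjoint_inner_left]
  have hR2 : ∀ v w, inner ℂ w (R v) = inner ℂ (B w) (B v) := fun v w => by
    simp [R, ContinuousLinearMap.adjoint_inner_right]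
  have hRc : IsCompactOperator R := by
    have := (hSc.clm_comp J).clm_comp (ContinuousLinearMap.adjoint B)
    exact this
  have hRs : R.toLinearMap.IsSymmetric := by
    intro v w
    change inner ℂ (R v) w = inner ℂ v (R w)
    rw [hR1, hR2]
  have hRU : ∀ g v, R (U g v) = U g (R v) := by
    intro g v
    refine ext_inner_right ℂ fun w => ?_
    have e : U g (U g⁻¹ w) = w := by
      change (U g * U g⁻¹) w = w
      rw [← map_mul]; simp
    conv_lhs => rw [← e]
    conv_rhs => rw [← e]
    rw [hR1, hB, hB, (U g).inner_map_map, (U g).inner_map_map, hR1]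
  have key := spectral_trivial U hU R hRc hRs hRU k0 hk
  have h3 : ∀ v, B (U k0 v) = B v := by
    intro v
    rw [← sub_eq_zero, ← map_sub, ← inner_self_eq_zero (𝕜 := ℂ), ← hR1, map_sub, key]
    simp
  have h4 : ∀ v, S (U k0 v) = S v := fun v => hJ (h3 v)
  have h5 : ∀ v, inner ℂ φ0 (U k0 v) = inner ℂ φ0 v := by
    intro v
    have := congrArg (fun f : BoundedContinuousFunction K ℂ => f 1) (h4 v)
    simp only [hS, map_one] at this
    exact this
  refine ext_inner_right ℂ fun w => ?_
  have e : U k0 (U k0⁻¹ w) = w := by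
    change (U k0 * U k0⁻¹) w = w
    rw [← map_mul]; simp
  conv_lhs => rw [← e]
  rw [(U k0).inner_map_map, ← h5, e]

theorem peter_weyl {K : Type*} [Group K] [TopologicalSpace K] [IsTopologicalGroup K]
    [CompactSpace K] [T2Space K] (k0 : K) (hk : RepTrivial k0) : k0 = 1 := by
  borelize K
  let μ : Measure K := Measure.haarMeasure ⊤
  have hμ1 : IsProbabilityMeasure μ := ⟨by
    simpa using Measure.haarMeasure_self (K₀ := (⊤ : TopologicalSpace.PositiveCompacts K))⟩
  let U0 : K → (Lp ℂ 2 μ →ₗᵢ[ℂ] Lp ℂ 2 μ) := fun g =>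
    { toFun := fun φ => DomMulAct.mk g⁻¹ • φ
      map_add' := fun a b => smul_add _ _ _
      map_smul' := fun c a => smul_comm _ _ _
      norm_map' := fun a => DomMulAct.norm_smul_Lp _ _ }
  have hU0 : ∀ g h φ, U0 g (U0 h φ) = U0 (g * h) φ := by
    intro g h φ
    change DomMulAct.mk g⁻¹ • DomMulAct.mk h⁻¹ • φ = DomMulAct.mk (g * h)⁻¹ • φ
    rw [smul_smul, mul_inv_rev, DomMulAct.mk_mul]
  have hU01 : ∀ φ, U0 1 φ = φ := by
    intro φ
    change DomMulAct.mk (1:K)⁻¹ • φ = φ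
    simp
  let U : K →* (Lp ℂ 2 μ ≃ₗᵢ[ℂ] Lp ℂ 2 μ) :=
    { toFun := fun g => LinearIsometryEquiv.mk (LinearEquiv.ofLinearMap (U0 g).toLinearMap (U0 g⁻¹).toLinearMap
        (by ext1 φ; change U0 g (U0 g⁻¹ φ) = φ; rw [hU0, mul_inv_cancel, hU01])
        (by ext1 φ; change U0 g⁻¹ (U0 g φ) = φ; rw [hU0, inv_mul_cancel, hU01])) (U0 g).norm_map
      map_one' := by ext1 φ; exact hU01 φ
      map_mul' := fun g h => by ext1 φ; exact (hU0 g h φ).symm }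
  have hUd : ∀ g φ, U g φ = DomMulAct.mk g⁻¹ • φ := fun _ _ => rfl
  have hUc : ∀ v, Continuous fun g => U g v := by
    intro v
    simp only [hUd]
    have h2 : Fact ((2:ENNReal) ≠ ⊤) := ⟨by simp⟩
    have : Continuous fun g : K => DomMulAct.mk g⁻¹ := DomMulAct.continuous_mk.comp continuous_inv
    exact this.smul continuous_const
  have hJU : ∀ g (f f' : BoundedContinuousFunction K ℂ), (∀ x, f' x = f (g⁻¹ * x)) →
      BoundedContinuousFunction.toLp 2 μ ℂ f' = U g (BoundedContinuousFunction.toLp 2 μ ℂ f) := by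
    intro g f f' hff
    rw [hUd]
    refine Lp.ext ?_
    refine (BoundedContinuousFunction.coeFn_toLp 2 μ ℂ f').trans ?_
    refine EventuallyEq.trans ?_ (DomMulAct.smul_Lp_ae_eq _ _).symm
    have h1 := (measurePreserving_smul g⁻¹ μ).quasiMeasurePreserving.ae_eq_comp
      (BoundedContinuousFunction.coeFn_toLp 2 μ ℂ f)
    refine EventuallyEq.trans ?_ h1.symm
    exact ae_of_all _ fun x => hff x
  have main := abstract_pw U hUc (BoundedContinuousFunction.toLp 2 μ ℂ)
    (BoundedContinuousFunction.toLp_injective μ) hJU k0 hk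
  by_contra hne
  have hne' : (1:K) ≠ k0⁻¹ := fun h => hne (by rw [eq_comm, inv_eq_one] at h; exact h)
  obtain ⟨f, hf0, hf1, -⟩ := exists_continuous_zero_one_of_isClosed (isClosed_singleton (x := (1:K)))
    (isClosed_singleton (x := k0⁻¹)) (by simpa using hne')
  let F : BoundedContinuousFunction K ℂ :=
    BoundedContinuousFunction.mkOfCompact ⟨fun x => (f x : ℂ), by fun_prop⟩
  let F' : BoundedContinuousFunction K ℂ :=
    BoundedContinuousFunction.mkOfCompact ⟨fun x => (f (k0⁻¹ * x) : ℂ), by fun_prop⟩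
  have h1 := hJU k0 F F' fun x => rfl
  rw [main] at h1
  have h2 := BoundedContinuousFunction.toLp_injective μ h1
  have h3 : F' 1 = F 1 := by rw [h2]
  have h4 : ((f (k0⁻¹ * 1) : ℝ) : ℂ) = (f 1 : ℝ) := h3
  rw [mul_one, hf0 rfl, hf1 rfl] at h4
  simp at h4

/-- the logarithm as a homeomorphism -/
noncomputable def lg : {x : ℝ // (0:ℝ) < x} ≃ₜ ℝ := Real.expOrderIso.toHomeomorph.symm

theorem exp_lg (x : {x : ℝ // (0:ℝ) < x}) : Real.exp (lg x) = x := by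
  have : Real.expOrderIso (lg x) = x := Real.expOrderIso.apply_symm_apply x
  exact congrArg Subtype.val this

theorem lg_mul (x y : {x : ℝ // (0:ℝ) < x}) : lg (x * y) = lg x + lg y := by
  apply Real.exp_injective
  rw [Real.exp_add, exp_lg, exp_lg, exp_lg]; rfl

theorem lg_one : lg 1 = 0 := by
  have := lg_mul 1 1
  simp at this; exact this

theorem lg_inv (x : {x : ℝ // (0:ℝ) < x}) : lg (x⁻¹) = - lg x := by
  have := lg_mul x x⁻¹
  rw [mul_inv_cancel, lg_one] at this
  linarith

set_option linter.unusedSectionVars false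
section intw
variable {L : Type*} [Group L] [TopologicalSpace L] [IsTopologicalGroup L]
  {ν : L →* {x : ℝ // (0:ℝ) < x}}

theorem cont_conjNormal : Continuous fun p : L × ν.ker => MulAut.conjNormal p.1 p.2 := by
  refine continuous_induced_rng.mpr ?_
  change Continuous fun p : L × ν.ker => ((MulAut.conjNormal p.1 p.2 : ν.ker) : L)
  simp only [MulAut.conjNormal_apply]
  fun_prop

/-- `T` intertwines `ρ` with its conjugate by `l` -/
def Intw {A : Type*} [CStarAlgebra A] (ρ : ν.ker →* unitary A) (l : L) (T : A) : Prop :=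
  ∀ k : ν.ker, T * (ρ k : A) = (ρ (MulAut.conjNormal l k) : A) * T

theorem Intw.mul {A : Type*} [CStarAlgebra A] {ρ : ν.ker →* unitary A} {l l' : L} {T T' : A}
    (h : Intw ρ l T) (h' : Intw ρ l' T') : Intw ρ (l * l') (T * T') := by
  intro k
  rw [mul_assoc, h' k, ← mul_assoc, h, mul_assoc, map_mul]; rfl

theorem Intw.star {A : Type*} [CStarAlgebra A] {ρ : ν.ker →* unitary A} {l : L} {T : A}
    (h : Intw ρ l T) (hT : T ∈ unitary A) : Intw ρ l⁻¹ (star T) := by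
  intro k
  have h1 := h (MulAut.conjNormal l⁻¹ k)
  have h2 : MulAut.conjNormal l (MulAut.conjNormal l⁻¹ k) = k := by
    apply Subtype.ext; simp
  rw [h2] at h1
  have h3 := congrArg (fun x => Star.star T * x * Star.star T) h1
  simp only [mul_assoc] at h3
  rw [(Unitary.mem_iff.mp hT).2, mul_one, ← mul_assoc, (Unitary.mem_iff.mp hT).1, one_mul] at h3
  exact h3.symm

theorem Intw.ker {A : Type*} [CStarAlgebra A] (ρ : ν.ker →* unitary A) (k : ν.ker) :
    Intw ρ (k : L) (ρ k : A) := by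
  intro h
  have : MulAut.conjNormal (k : L) h = k * h * k⁻¹ := by
    apply Subtype.ext; simp [MulAut.conjNormal_apply]
  rw [this]
  have e : ρ (k * h * k⁻¹) * ρ k = ρ k * ρ h := by
    rw [← map_mul, ← map_mul]; simp
  exact congrArg Subtype.val e.symm

theorem intw_near {A : Type*} [CStarAlgebra A] [FiniteDimensional ℂ A] [CompactSpace ν.ker]
    (ρ : ν.ker →* unitary A) (hρ : Continuous ρ) :
    ∀ᶠ l in 𝓝 (1:L), ∃ T ∈ unitary A, Intw ρ l T := by
  have hρ' : Continuous fun k => (ρ k : A) := continuous_subtype_val.comp hρ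
  have h1 : ∀ᶠ l in 𝓝 (1:L), ∀ k ∈ (Set.univ : Set ν.ker),
      ‖(ρ (MulAut.conjNormal l k) : A) - (ρ k : A)‖ < 1/2 := by
    refine isCompact_univ.eventually_forall_of_forall_eventually fun k _ => ?_
    have hc : Continuous fun p : L × ν.ker =>
        ‖(ρ (MulAut.conjNormal p.1 p.2) : A) - (ρ p.2 : A)‖ :=
      ((hρ'.comp cont_conjNormal).sub (hρ'.comp continuous_snd)).norm
    have := hc.tendsto (1, k)
    refine this.eventually_lt_const ?_
    simp
  filter_upwards [h1] with l hl
  borelize ↥ν.ker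
  let μ : Measure ν.ker := Measure.haarMeasure ⊤
  have hμ1 : IsProbabilityMeasure μ := ⟨by
    simpa using Measure.haarMeasure_self (K₀ := (⊤ : TopologicalSpace.PositiveCompacts ν.ker))⟩
  have hcl : Continuous fun k : ν.ker => MulAut.conjNormal l k :=
    cont_conjNormal.comp (Continuous.prodMk_right l)
  let f : ν.ker → A := fun k => (ρ (MulAut.conjNormal l k) : A) * star (ρ k : A)
  have hf : Continuous f := (hρ'.comp hcl).mul hρ'.star
  let T : A := ∫ k, f k ∂μ
  have hT : Intw ρ l T := by
    intro h
    change (∫ k, f k ∂μ) * _ = _ * ∫ k, f k ∂μ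
    rw [← avg_mul_left μ f hf, ← avg_mul_right μ f hf, ← integral_mul_left_eq_self _ h]
    congr 1; ext k
    simp only [f, map_mul, Submonoid.coe_mul, star_mul, mul_assoc,
      Unitary.coe_star_mul_self, mul_one]
  have hT1 : ‖T - 1‖ ≤ 1/2 := by
    have e : T - 1 = ∫ k, (f k - 1) ∂μ := by
      rw [integral_sub (cont_integrable μ f hf) (integrable_const _)]; simp [T]
    rw [e]
    refine (norm_integral_le_of_norm_le_const (C := 1/2) (ae_of_all _ fun k => ?_)).trans (by simp)
    have e2 : f k - 1 = ((ρ (MulAut.conjNormal l k) : A) - (ρ k : A)) * star (ρ k : A) := by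
      rw [sub_mul, (Unitary.mem_iff.mp (ρ k).2).2]
    rw [e2, ← Unitary.coe_star, CStarRing.norm_mul_coe_unitary]
    exact (hl k trivial).le
  have hTu : IsUnit T := by
    have : ‖1 - T‖ < 1 := by rw [norm_sub_rev]; linarith
    have := isUnit_one_sub_of_norm_lt_one this
    simpa using this
  obtain ⟨u, hu, q, hq, hx, hcomm⟩ := polar_unit T hTu
  refine ⟨u, hu, fun k => ?_⟩
  have hTT : Commute (ρ k : A) (star T * T) := by
    have h2 := hT k
    have h3 := congrArg star (hT k⁻¹)
    simp only [star_mul, map_inv, ← Unitary.star_eq_inv, Unitary.coe_star, star_star] at h3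
    unfold Commute SemiconjBy
    rw [← mul_assoc, h3, mul_assoc, ← h2, mul_assoc]
  have hqc := hcomm _ hTT
  have hqu : IsUnit (q * q) := by
    have husP : star u * T = q * q := by
      rw [hx, ← mul_assoc, (Unitary.mem_iff.mp hu).1, one_mul]
    rw [← husP]
    exact (Units.isUnit ⟨star u, u, (Unitary.mem_iff.mp hu).1, (Unitary.mem_iff.mp hu).2⟩).mul hTu
  refine hqu.mul_right_cancel ?_
  rw [mul_assoc, hqc.eq, ← mul_assoc, ← hx, hT k, hx, mul_assoc]

theorem intw_all {A : Type*} [CStarAlgebra A] [FiniteDimensional ℂ A] [CompactSpace ν.ker]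
    (hopen : IsOpenMap ν)
    (ρ : ν.ker →* unitary A) (hρ : Continuous ρ) (l : L) : ∃ T ∈ unitary A, Intw ρ l T := by
  let H : Subgroup L :=
    { carrier := {l | ∃ T ∈ unitary A, Intw ρ l T}
      mul_mem' := by
        rintro a b ⟨T, hT, h⟩ ⟨T', hT', h'⟩
        exact ⟨T * T', mul_mem hT hT', h.mul h'⟩
      one_mem' := ⟨1, one_mem _, fun k => by simp⟩
      inv_mem' := by
        rintro a ⟨T, hT, h⟩
        exact ⟨star T, Unitary.star_mem hT, h.star hT⟩ }
  have hH : IsOpen (H : Set L) := H.isOpen_of_mem_nhds (intw_near ρ hρ)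
  have hHm : IsOpen ((H.map ν : Subgroup _) : Set {x : ℝ // (0:ℝ) < x}) := by
    rw [Subgroup.coe_map]; exact hopen _ hH
  have hconn : PreconnectedSpace {x : ℝ // (0:ℝ) < x} :=
    Subtype.preconnectedSpace isPreconnected_Ioi
  have hcm : ContinuousMul {x : ℝ // (0:ℝ) < x} := ⟨by
    refine Continuous.subtype_mk ?_ _
    fun_prop⟩
  have hcl : IsClopen ((H.map ν : Subgroup _) : Set {x : ℝ // (0:ℝ) < x}) :=
    ⟨Subgroup.isClosed_of_isOpen _ hHm, hHm⟩
  have huniv := hcl.eq_univ ⟨1, one_mem _⟩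
  have hl : ν l ∈ H.map ν := by
    have : ν l ∈ ((H.map ν : Subgroup _) : Set {x : ℝ // (0:ℝ) < x}) := by rw [huniv]; trivial
    exact this
  obtain ⟨h, hh, hhl⟩ := hl
  have hk : h⁻¹ * l ∈ ν.ker := by rw [MonoidHom.mem_ker, map_mul, map_inv, hhl]; simp
  have hkH : h⁻¹ * l ∈ H := ⟨(ρ ⟨_, hk⟩ : A), (ρ ⟨_, hk⟩).2, Intw.ker ρ ⟨_, hk⟩⟩
  have := H.mul_mem hh hkH
  rw [mul_inv_cancel_left] at this
  exact this

theorem one_intw {A : Type*} [CStarAlgebra A] [FiniteDimensional ℂ A] [CompactSpace ν.ker]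
    [T2Space L] (hopen : IsOpenMap ν) (hprop : IsProperMap ν) (hsurj : Function.Surjective ν)
    {τ : A →ₗ[ℂ] ℂ} (hτ : IsTr τ)
    (ρ : ν.ker →* unitary A) (hρ : Continuous ρ) (t : ℝ) :
    ∃ l, lg (ν l) = t ∧ ∀ k : ν.ker, ρ (MulAut.conjNormal l k) = ρ k := by
  have hρ' : Continuous fun k => (ρ k : A) := continuous_subtype_val.comp hρ
  let G : ℝ → Set A := fun t => {T | T ∈ unitary A ∧ ∃ l, lg (ν l) = t ∧ Intw ρ l T}
  have hGc : IsClosed {p : ℝ × A | p.2 ∈ G p.1} := by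
    let E : Set (L × A) := {p | p.2 ∈ unitary A ∧ Intw ρ p.1 p.2}
    have hE : IsClosed E := by
      have e : E = (Prod.snd ⁻¹' (unitary A : Set A)) ∩
          ⋂ k : ν.ker, {p | p.2 * (ρ k : A) = (ρ (MulAut.conjNormal p.1 k) : A) * p.2} := by
        ext p; simp [E, Intw]
      rw [e]
      refine IsClosed.inter (isClosed_unitary.preimage continuous_snd) (isClosed_iInter fun k => ?_)
      have hcl : Continuous fun l : L => MulAut.conjNormal l k :=
        cont_conjNormal.comp (Continuous.prodMk_left k)
      refine isClosed_eq (continuous_snd.mul continuous_const) ?_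
      exact ((hρ'.comp hcl).comp continuous_fst).mul continuous_snd
    have hp : IsProperMap (Prod.map (fun l => lg (ν l)) (id : A → A)) :=
      (lg.isProperMap.comp hprop).prodMap isProperMap_id
    convert! hp.isClosedMap _ hE using 1
    ext ⟨t, T⟩
    simp only [G, E, Set.mem_ofPred_eq, Set.mem_image, Prod.map, Prod.mk.injEq, id]
    constructor
    · rintro ⟨h1, l, h2, h3⟩
      exact ⟨(l, T), ⟨h1, h3⟩, h2, rfl⟩
    · rintro ⟨⟨l, T'⟩, ⟨h1, h3⟩, h2, rfl⟩
      exact ⟨h1, l, h2, h3⟩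
  have key := main_group ρ hρ hτ G (fun t T h => h.1) hGc ?_ ?_ ?_ ?_ ?_ t
  · obtain ⟨-, l, hl, h⟩ := key
    refine ⟨l, hl, fun k => ?_⟩
    have := h k
    rw [one_mul, mul_one] at this
    exact Subtype.ext this.symm
  · rintro s t x y ⟨hx, l, hl, h⟩ ⟨hy, l', hl', h'⟩
    exact ⟨mul_mem hx hy, l * l', by rw [map_mul, lg_mul, hl, hl'], h.mul h'⟩
  · rintro t x ⟨hx, l, hl, h⟩
    exact ⟨Unitary.star_mem hx, l⁻¹, by rw [map_inv, lg_inv, hl], h.star hx⟩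
  · intro t
    obtain ⟨l, hl⟩ := hsurj (lg.symm t)
    obtain ⟨T, hT, h⟩ := intw_all hopen ρ hρ l
    exact ⟨T, hT, l, by rw [hl]; simp, h⟩
  · intro k
    exact ⟨(ρ k).2, k, by rw [MonoidHom.mem_ker.mp k.2, lg_one], Intw.ker ρ k⟩
  · intro u hu hc
    refine ⟨hu, 1, by rw [map_one, lg_one], fun k => ?_⟩
    simpa using (hc k).eq

open scoped Matrix.Norms.L2Operator in
theorem fin_family [CompactSpace ν.ker]
    [T2Space L] (hopen : IsOpenMap ν) (hprop : IsProperMap ν) (hsurj : Function.Surjective ν)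
    {ι : Type*} [Fintype ι] (n : ι → ℕ) (ρ : ∀ i, ν.ker →* unitary (Matrix (Fin (n i)) (Fin (n i)) ℂ))
    (hρ : ∀ i, Continuous (ρ i)) (t : ℝ) :
    ∃ l, lg (ν l) = t ∧ ∀ i (k : ν.ker), ρ i (MulAut.conjNormal l k) = ρ i k := by
  let A := ∀ i, Matrix (Fin (n i)) (Fin (n i)) ℂ
  let τ : A →ₗ[ℂ] ℂ := ∑ i, (Matrix.traceLinearMap (Fin (n i)) ℂ ℂ).comp (LinearMap.proj i)
  have hτ' : ∀ x : A, τ x = ∑ i, (x i).trace := fun x => by simp [τ]; rfl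
  have hτ : IsTr τ := by
    constructor
    · intro x y
      rw [hτ', hτ']
      exact Finset.sum_congr rfl fun i _ => Matrix.trace_mul_comm _ _
    · intro x
      rw [hτ', hτ', star_sum]
      refine Finset.sum_congr rfl fun i _ => ?_
      rw [← Matrix.trace_conjTranspose]; rfl
    · intro x hx
      rw [hτ', Complex.re_sum]
      have hnn : ∀ i, 0 ≤ ((star x * x) i).trace.re ∧ (((star x * x) i).trace.re = 0 → x i = 0) := by
        intro i
        have e : ((star x * x) i).trace = (((x i).conjTranspose) * x i).trace := rfl
        open scoped ComplexOrder in
        have h0 := (Matrix.posSemidef_conjTranspose_mul_self (x i)).trace_nonneg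
        rw [e]
        have h0' := Complex.nonneg_iff.mp h0
        refine ⟨h0'.1, fun h => ?_⟩
        have : ((x i).conjTranspose * x i).trace = 0 := Complex.ext h h0'.2.symm
        open scoped ComplexOrder in
        exact Matrix.trace_conjTranspose_mul_self_eq_zero_iff.mp this
      refine lt_of_le_of_ne (Finset.sum_nonneg fun i _ => (hnn i).1) fun h => hx ?_
      ext1 i
      exact (hnn i).2 ((Finset.sum_eq_zero_iff_of_nonneg fun i _ => (hnn i).1).mp h.symm i (Finset.mem_univ i))
  let P : ν.ker →* unitary A :=
    { toFun := fun k => ⟨fun i => (ρ i k : Matrix (Fin (n i)) (Fin (n i)) ℂ), by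
        rw [Unitary.mem_iff]
        exact ⟨funext fun i => Unitary.coe_star_mul_self (ρ i k),
          funext fun i => Unitary.coe_mul_star_self (ρ i k)⟩⟩
      map_one' := by ext1; funext i; simp; rfl
      map_mul' := fun a b => by ext1; funext i; simp; rfl }
  have hP : Continuous P := by
    refine Continuous.subtype_mk ?_ _
    exact continuous_pi fun i => continuous_subtype_val.comp (hρ i)
  obtain ⟨l, hl, h⟩ := one_intw hopen hprop hsurj hτ P hP t
  refine ⟨l, hl, fun i k => ?_⟩
  have := congrFun (congrArg Subtype.val (h k)) i
  exact Subtype.ext this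
end intw

set_option linter.unusedSectionVars false
section polar
variable {L : Type*} [Group L] [TopologicalSpace L] [IsTopologicalGroup L]
  {ν : L →* {x : ℝ // (0:ℝ) < x}}

/-- logarithm of `ν` -/
noncomputable def ell (ν : L →* {x : ℝ // (0:ℝ) < x}) (l : L) : ℝ := lg (ν l)

theorem ell_mul (x y : L) : ell ν (x * y) = ell ν x + ell ν y := by
  simp [ell, lg_mul]

theorem ell_one : ell ν 1 = 0 := by simp [ell, lg_one]

theorem ell_inv (x : L) : ell ν x⁻¹ = - ell ν x := by simp [ell, lg_inv]

theorem ell_pow (x : L) (n : ℕ) : ell ν (x ^ n) = n * ell ν x := by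
  induction n with
  | zero => simp [ell_one]
  | succ n ih => rw [pow_succ, ell_mul, ih]; push_cast; ring

theorem ell_zpow (x : L) (n : ℤ) : ell ν (x ^ n) = n * ell ν x := by
  cases n with
  | ofNat n => simp [ell_pow]
  | negSucc n => rw [zpow_negSucc, ell_inv, ell_pow]; push_cast; ring

theorem mem_ker_iff (x : L) : x ∈ ν.ker ↔ ell ν x = 0 := by
  rw [MonoidHom.mem_ker, ell]
  constructor
  · intro h; rw [h, lg_one]
  · intro h; exact lg.injective (h.trans lg_one.symm)

theorem div_mem_ker {x y : L} (h : ell ν x = ell ν y) : x⁻¹ * y ∈ ν.ker := by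
  rw [mem_ker_iff, ell_mul, ell_inv, h]; ring

theorem ell_proper (hprop : IsProperMap ν) : IsProperMap (ell ν) := lg.isProperMap.comp hprop

theorem exists_centralizing [CompactSpace ν.ker]
    [T2Space L] (hopen : IsOpenMap ν) (hprop : IsProperMap ν) (hsurj : Function.Surjective ν)
    (t : ℝ) : ∃ l ∈ Subgroup.centralizer (ν.ker : Set L), ell ν l = t := by
  let I := Σ n : ℕ, {ρ : ν.ker →* unitary (Matrix (Fin n) (Fin n) ℂ) // Continuous ρ}
  let F : I → Set L := fun i => {l | ∀ k, i.2.1 (MulAut.conjNormal l k) = i.2.1 k}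
  have hF : ∀ i, IsClosed (F i) := by
    intro i
    have : F i = ⋂ k, {l | i.2.1 (MulAut.conjNormal l k) = i.2.1 k} := by ext; simp [F]
    rw [this]
    refine isClosed_iInter fun k => isClosed_eq ?_ continuous_const
    exact i.2.2.comp (cont_conjNormal.comp (Continuous.prodMk_left k))
  have hc : IsCompact (ell ν ⁻¹' {t}) := (ell_proper hprop).isCompact_preimage isCompact_singleton
  obtain ⟨l, hl, hlF⟩ := hc.inter_iInter_nonempty F hF (by
    intro u
    obtain ⟨l, hl, h⟩ := fin_family hopen hprop hsurj (ι := u) (fun i => i.1.1) (fun i => i.1.2.1)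
      (fun i => i.1.2.2) t
    refine ⟨l, hl, ?_⟩
    simp only [Set.mem_iInter]
    intro i hi k
    exact h ⟨i, hi⟩ k)
  refine ⟨l, ?_, hl⟩
  rw [Subgroup.mem_centralizer_iff]
  intro k hk
  have h1 : MulAut.conjNormal l (⟨k, hk⟩ : ν.ker) * (⟨k, hk⟩ : ν.ker)⁻¹ = 1 := by
    refine peter_weyl _ fun n ρ hρ => ?_
    have := Set.mem_iInter.mp hlF ⟨n, ρ, hρ⟩ ⟨k, hk⟩
    simp only at this
    rw [map_mul, this, ← map_mul]; simp
  have h2 := congrArg Subtype.val (mul_inv_eq_one.mp h1)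
  simp only [MulAut.conjNormal_apply] at h2
  rw [mul_inv_eq_iff_eq_mul] at h2
  exact h2.symm

theorem exists_center [CompactSpace ν.ker]
    [T2Space L] (hopen : IsOpenMap ν) (hprop : IsProperMap ν) (hsurj : Function.Surjective ν)
    (t : ℝ) : ∃ l ∈ Subgroup.center L, ell ν l = t := by
  have hex := exists_centralizing hopen hprop hsurj
  set Q := Subgroup.centralizer (ν.ker : Set L) with hQ
  have hQK : ∀ q ∈ Q, ∀ k ∈ ν.ker, q * k = k * q := fun q hq k hk =>
    (Subgroup.mem_centralizer_iff.mp hq k hk).symm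
  have hab : ∀ x ∈ Q, ∀ y ∈ Q, x * y = y * x := by
    intro x hx y hy
    by_cases hx0 : ell ν x = 0
    · exact (hQK y hy x ((mem_ker_iff x).mpr hx0)).symm
    let N : Subgroup L := Q ⊓ Subgroup.centralizer {x}
    have hN : ∀ z, z ∈ N ↔ z ∈ Q ∧ x * z = z * x := by
      intro z; rw [Subgroup.mem_inf, Subgroup.mem_centralizer_singleton_iff]; 
      constructor <;> rintro ⟨h1, h2⟩ <;> exact ⟨h1, h2.symm⟩
    have hNc : IsClosed (N : Set L) := by
      have : (N : Set L) = (Q : Set L) ∩ {z | x * z = z * x} := by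
        ext z; exact hN z
      rw [this]
      refine IsClosed.inter ?_ (isClosed_eq (by fun_prop) (by fun_prop))
      exact Set.isClosed_centralizer (ν.ker : Set L)
    have himg := (ell_proper hprop).isClosedMap _ hNc
    have hroot : ∀ q : ℕ, q ≠ 0 → ∃ z ∈ N, ell ν z = ell ν x / q := by
      intro q hq
      obtain ⟨z, hz, hzt⟩ := hex (ell ν x / q)
      refine ⟨z, (hN z).mpr ⟨hz, ?_⟩, hzt⟩
      have hk : (z ^ q)⁻¹ * x ∈ ν.ker := div_mem_ker (by
        rw [ell_pow, hzt]; field_simp)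
      have h1 := hQK z hz _ hk
      have e : x = z ^ q * ((z ^ q)⁻¹ * x) := by group
      calc x * z = z ^ q * (((z ^ q)⁻¹ * x) * z) := by group
        _ = z ^ q * (z * ((z ^ q)⁻¹ * x)) := by rw [h1]
        _ = z * x := by group
    have hclosed : IsClosed {r : ℝ | ell ν x * r ∈ ell ν '' (N : Set L)} :=
      himg.preimage (by fun_prop)
    have hrat : ∀ r : ℚ, (r : ℝ) ∈ {r : ℝ | ell ν x * r ∈ ell ν '' (N : Set L)} := by
      intro r
      obtain ⟨z, hz, hzt⟩ := hroot r.den r.den_nz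
      refine ⟨z ^ r.num, N.zpow_mem hz _, ?_⟩
      rw [ell_zpow, hzt]
      have : (r : ℝ) = r.num / r.den := by exact_mod_cast (Rat.num_div_den r).symm
      rw [this]; ring
    have hall : ∀ r : ℝ, r ∈ {r : ℝ | ell ν x * r ∈ ell ν '' (N : Set L)} := by
      intro r
      have := hclosed.closure_subset_iff.mpr (Set.range_subset_iff.mpr hrat)
      apply this
      rw [(Rat.denseRange_cast (𝕜 := ℝ)).closure_range]; trivial
    obtain ⟨n, hn, hny⟩ := hall (ell ν y / ell ν x)
    rw [mul_div_cancel₀ _ hx0] at hny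
    have hk := div_mem_ker hny
    have e : y = n * (n⁻¹ * y) := by group
    have h1 := hQK x hx _ hk
    have h2 := ((hN n).mp hn).2
    rw [e, ← mul_assoc, h2, mul_assoc, h1]
    group
  obtain ⟨q, hq, hqt⟩ := hex t
  refine ⟨q, ?_, hqt⟩
  rw [Subgroup.mem_center_iff]
  intro l
  obtain ⟨q', hq', hl⟩ := hex (ell ν l)
  have hk := div_mem_ker hl
  have e : l = q' * (q'⁻¹ * l) := by group
  rw [e, mul_assoc, ← hQK q hq _ hk, ← mul_assoc, hab q' hq' q hq, mul_assoc]

open scoped commutatorElement in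
theorem ker_perfect [CompactSpace ν.ker] [T2Space L]
    (hZ : ∀ t, ∃ l ∈ Subgroup.center L, ell ν l = t)
    (hker : ν.ker = (commutator L).topologicalClosure) :
    (commutator ν.ker).topologicalClosure = ⊤ := by
  set D := (commutator ν.ker).topologicalClosure with hD
  have hcl : IsClosed ((D.map ν.ker.subtype : Subgroup L) : Set L) := by
    rw [Subgroup.coe_map]
    have : IsClosed (D : Set ν.ker) := Subgroup.isClosed_topologicalClosure _
    exact (this.isCompact.image continuous_subtype_val).isClosed
  have hle : commutator L ≤ D.map ν.ker.subtype := by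
    rw [commutator_def, Subgroup.commutator_le]
    intro a _ b _
    obtain ⟨z, hz, hza⟩ := hZ (ell ν a)
    obtain ⟨w, hw, hwb⟩ := hZ (ell ν b)
    let k : ν.ker := ⟨_, div_mem_ker hza⟩
    let h : ν.ker := ⟨_, div_mem_ker hwb⟩
    have hz' := Subgroup.mem_center_iff.mp hz
    have hw' := Subgroup.mem_center_iff.mp hw
    refine ⟨⁅k, h⁆, Subgroup.le_topologicalClosure _ ?_, ?_⟩
    · rw [commutator_def]
      exact Subgroup.commutator_mem_commutator (Subgroup.mem_top _) (Subgroup.mem_top _)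
    have ea : a = z * k := by simp [k]
    have eb : b = w * h := by simp [h]
    change ((⁅k, h⁆ : ν.ker) : L) = ⁅a, b⁆
    have hcz : ∀ x y : L, ⁅z * x, y⁆ = ⁅x, y⁆ := by
      intro x y
      simp only [commutatorElement_def, mul_inv_rev]
      have : z * x * y * (x⁻¹ * z⁻¹) * y⁻¹ = z * (x * y * x⁻¹) * z⁻¹ * y⁻¹ := by group
      rw [this, ← hz' (x * y * x⁻¹)]; group
    have hcw : ∀ x y : L, ⁅x, w * y⁆ = ⁅x, y⁆ := by
      intro x y
      simp only [commutatorElement_def, mul_inv_rev]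
      have : x * (w * y) * x⁻¹ * (y⁻¹ * w⁻¹) = (x * w) * y * x⁻¹ * y⁻¹ * w⁻¹ := by group
      rw [this, hw' x]
      have : w * x * y * x⁻¹ * y⁻¹ * w⁻¹ = w * (x * y * x⁻¹ * y⁻¹) * w⁻¹ := by group
      rw [this, ← hw' (x * y * x⁻¹ * y⁻¹)]; group
    rw [ea, eb, hcz, hcw]
    rfl
  have h2 : ν.ker ≤ D.map ν.ker.subtype := by
    exact hker.le.trans (Subgroup.topologicalClosure_minimal _ hle hcl)
  rw [eq_top_iff]
  intro k _
  obtain ⟨d, hd, hdk⟩ := h2 k.2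
  have : d = k := Subtype.ext hdk
  rwa [← this]
end polar

theorem perfect_hom {K : Type*} [Group K] [TopologicalSpace K] [IsTopologicalGroup K]
    (hK : (commutator K).topologicalClosure = ⊤) (d : K →* ℂ) (hd : Continuous d) (k : K) :
    d k = 1 := by
  let N : Subgroup K := d.toHomUnits.ker
  have hN : ∀ k, k ∈ N ↔ d k = 1 := by
    intro k
    rw [MonoidHom.mem_ker, Units.ext_iff]; rfl
  have hcl : IsClosed (N : Set K) := by
    have : (N : Set K) = {k | d k = 1} := by ext k; exact hN k
    rw [this]
    exact isClosed_eq hd continuous_const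
  have h := Subgroup.topologicalClosure_minimal _ (Abelianization.commutator_subset_ker d.toHomUnits) hcl
  rw [hK] at h
  exact (hN k).mp (h (Subgroup.mem_top k))

open scoped Matrix.Norms.L2Operator in
theorem central_torsion {K : Type*} [Group K] [TopologicalSpace K] [IsTopologicalGroup K]
    (hK : (commutator K).topologicalClosure = ⊤) {n : ℕ}
    (ρ : K →* unitary (Matrix (Fin n) (Fin n) ℂ)) (hρ : Continuous ρ) (z : K)
    (hz : ∀ k, z * k = k * z) : ρ z ^ (n.factorial) = 1 := by
  have hρ' : Continuous fun k => (ρ k : Matrix (Fin n) (Fin n) ℂ) := continuous_subtype_val.comp hρ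
  set M : Matrix (Fin n) (Fin n) ℂ := (ρ z : Matrix (Fin n) (Fin n) ℂ) with hM
  have hMk : ∀ k, M * (ρ k : Matrix (Fin n) (Fin n) ℂ) = (ρ k : Matrix (Fin n) (Fin n) ℂ) * M := by
    intro k
    have := congrArg ρ (hz k)
    rw [map_mul, map_mul] at this
    exact congrArg Subtype.val this
  have hsp : ∀ c ∈ spectrum ℂ M, c ^ n.factorial = 1 := by
    intro c hc
    rw [← Matrix.spectrum_toLin' M, ← Module.End.hasEigenvalue_iff_mem_spectrum] at hc
    let W := Module.End.eigenspace (Matrix.toLin' M) c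
    have hW : ∀ w, w ∈ W ↔ M.mulVec w = c • w := fun w => by
      rw [Module.End.mem_eigenspace_iff, Matrix.toLin'_apply]
    have hinv : ∀ k, ∀ w ∈ W, (ρ k : Matrix (Fin n) (Fin n) ℂ).mulVec w ∈ W := by
      intro k w hw
      rw [hW] at hw ⊢
      rw [Matrix.mulVec_mulVec, hMk, ← Matrix.mulVec_mulVec, hw, Matrix.mulVec_smul]
    let E : K →* Module.End ℂ W :=
      { toFun := fun k => (Matrix.toLin' (ρ k : Matrix (Fin n) (Fin n) ℂ)).restrict (hinv k)
        map_one' := by ext w; simp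
        map_mul' := fun a b => by
          ext1 w
          apply Subtype.ext
          change (Matrix.toLin' (ρ (a * b) : Matrix (Fin n) (Fin n) ℂ)) w =
            (ρ a : Matrix (Fin n) (Fin n) ℂ).mulVec ((ρ b : Matrix (Fin n) (Fin n) ℂ).mulVec w)
          rw [Matrix.mulVec_mulVec, map_mul]; rfl }
    let d : K →* ℂ := (LinearMap.det : Module.End ℂ W →* ℂ).comp E
    have hd : Continuous d := by
      let b := Module.finBasis ℂ W
      have : (d : K → ℂ) = fun k => (LinearMap.toMatrix b b (E k)).det := by
        ext k; simp [d, LinearMap.det_toMatrix]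
      rw [this]
      refine Continuous.matrix_det (continuous_matrix fun i j => ?_)
      simp only [LinearMap.toMatrix_apply]
      have h1 : Continuous fun k => E k (b j) := by
        refine Continuous.subtype_mk (f := fun k => (ρ k : Matrix (Fin n) (Fin n) ℂ).mulVec (b j : Fin n → ℂ)) ?_ _
        exact Continuous.matrix_mulVec hρ' continuous_const
      exact (LinearMap.continuous_of_finiteDimensional (b.coord i)).comp h1
    have h1 := perfect_hom hK d hd z
    have h2 : E z = c • (1 : Module.End ℂ W) := by
      ext1 w
      apply Subtype.ext
      exact (hW w).mp w.2
    have h3 : c ^ Module.finrank ℂ W = 1 := by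
      have : d z = LinearMap.det (E z) := rfl
      rw [this, h2, LinearMap.det_smul, map_one, mul_one] at h1
      exact h1
    have hpos : 0 < Module.finrank ℂ W := by
      rw [Module.finrank_pos_iff, Submodule.nontrivial_iff_ne_bot]
      exact hc
    have hle : Module.finrank ℂ W ≤ n := by
      simpa using Submodule.finrank_le W
    obtain ⟨e, he⟩ := Nat.dvd_factorial hpos hle
    rw [he, pow_mul, h3, one_pow]
  apply Subtype.ext
  rw [SubmonoidClass.coe_pow, OneMemClass.coe_one, ← hM]
  have hn : IsStarNormal M := ⟨by
    unfold Commute SemiconjBy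
    rw [(Unitary.mem_iff.mp (ρ z).2).1, (Unitary.mem_iff.mp (ρ z).2).2]⟩
  rw [← cfc_pow_id (R := ℂ) M n.factorial]
  rw [← cfc_one (R := ℂ) M]
  exact cfc_congr fun c hc => hsp c hc

open scoped Matrix.Norms.L2Operator in
theorem no_small_torsion {n m : ℕ} (hm : m ≠ 0) :
    ∀ᶠ M in 𝓝 (1 : Matrix (Fin n) (Fin n) ℂ), M ^ m = 1 → M = 1 := by
  have hc : Continuous fun M : Matrix (Fin n) (Fin n) ℂ => ∑ i ∈ Finset.range m, M ^ i := by
    fun_prop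
  have hu : IsUnit (∑ i ∈ Finset.range m, (1 : Matrix (Fin n) (Fin n) ℂ) ^ i) := by
    have : (∑ i ∈ Finset.range m, (1 : Matrix (Fin n) (Fin n) ℂ) ^ i) =
        algebraMap ℂ _ (m : ℂ) := by simp
    rw [this]
    exact (IsUnit.mk0 (m : ℂ) (by exact_mod_cast hm)).map _
  have := hc.continuousAt.preimage_mem_nhds (Units.isOpen.mem_nhds hu)
  filter_upwards [this] with M hM h1
  have h2 : (∑ i ∈ Finset.range m, M ^ i) * (M - 1) = 0 := by rw [geom_sum_mul, h1, sub_self]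
  have h3 : IsUnit (∑ i ∈ Finset.range m, M ^ i) := hM
  exact sub_eq_zero.mp (h3.mul_right_eq_zero.mp h2)

set_option linter.unusedSectionVars false
theorem center_closed (L : Type*) [Group L] [TopologicalSpace L] [IsTopologicalGroup L]
    [T2Space L] : IsClosed (Subgroup.center L : Set L) := by
  rw [Subgroup.coe_center, ← Set.centralizer_univ]
  exact Set.isClosed_centralizer _

section split
variable {L : Type*} [Group L] [TopologicalSpace L] [IsTopologicalGroup L]
  {ν : L →* {x : ℝ // (0:ℝ) < x}}

/-- kernel of a representation of `ker ν`, as a subgroup of `L` -/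
def repKer {n : ℕ} (ρ : ν.ker →* unitary (Matrix (Fin n) (Fin n) ℂ)) : Subgroup L :=
  ρ.ker.map ν.ker.subtype

theorem mem_repKer {n : ℕ} (ρ : ν.ker →* unitary (Matrix (Fin n) (Fin n) ℂ)) (x : L) :
    x ∈ repKer ρ ↔ ∃ h : x ∈ ν.ker, ρ ⟨x, h⟩ = 1 := by
  constructor
  · rintro ⟨k, hk, rfl⟩
    exact ⟨k.2, hk⟩
  · rintro ⟨h, h1⟩
    exact ⟨⟨x, h⟩, h1, rfl⟩

theorem repKer_closed [T2Space L] [CompactSpace ν.ker] {n : ℕ}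
    (ρ : ν.ker →* unitary (Matrix (Fin n) (Fin n) ℂ)) (hρ : Continuous ρ) :
    IsClosed (repKer ρ : Set L) := by
  unfold repKer
  rw [Subgroup.coe_map]
  have : IsClosed (ρ.ker : Set ν.ker) := isClosed_singleton.preimage hρ
  exact (this.isCompact.image continuous_subtype_val).isClosed

/-- the product of the `n!`-th powers in the center with central elements in the kernel of `ρ` -/
def Zi {n : ℕ} (ρ : ν.ker →* unitary (Matrix (Fin n) (Fin n) ℂ)) : Subgroup L where
  carrier := {z | z ∈ Subgroup.center L ∧ ∃ y ∈ Subgroup.center L, (y ^ n.factorial)⁻¹ * z ∈ repKer ρ}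
  one_mem' := ⟨one_mem _, 1, one_mem _, by simp⟩
  mul_mem' := by
    rintro a b ⟨ha, y, hy, h⟩ ⟨hb, y', hy', h'⟩
    refine ⟨mul_mem ha hb, y * y', mul_mem hy hy', ?_⟩
    have hc : Commute y y' := (Subgroup.mem_center_iff.mp hy y').symm
    have e : ((y * y') ^ n.factorial)⁻¹ * (a * b) =
        ((y ^ n.factorial)⁻¹ * a) * ((y' ^ n.factorial)⁻¹ * b) := by
      rw [hc.mul_pow, mul_inv_rev]
      have h1 := Subgroup.mem_center_iff.mp (inv_mem (pow_mem hy' n.factorial))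
        ((y ^ n.factorial)⁻¹ * a)
      rw [mul_assoc, ← mul_assoc (y ^ n.factorial)⁻¹, ← mul_assoc, ← h1, mul_assoc]
    rw [e]
    exact mul_mem h h'
  inv_mem' := by
    rintro a ⟨ha, y, hy, h⟩
    refine ⟨inv_mem ha, y⁻¹, inv_mem hy, ?_⟩
    have e : (y⁻¹ ^ n.factorial)⁻¹ * a⁻¹ = ((y ^ n.factorial)⁻¹ * a)⁻¹ := by
      rw [mul_inv_rev, inv_inv, inv_pow, inv_inv]
      exact (Subgroup.mem_center_iff.mp (inv_mem ha) _)
    rw [e]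
    exact inv_mem h

theorem Zi_closed [T2Space L] [CompactSpace ν.ker] (hprop : IsProperMap ν) {n : ℕ}
    (ρ : ν.ker →* unitary (Matrix (Fin n) (Fin n) ℂ)) (hρ : Continuous ρ) :
    IsClosed (Zi ρ : Set L) := by
  have hcen : IsClosed (Subgroup.center L : Set L) := center_closed L
  let E : Set (L × L) := {p | p.1 ∈ Subgroup.center L ∧ p.2 ∈ Subgroup.center L ∧
    (p.2 ^ n.factorial)⁻¹ * p.1 ∈ repKer ρ}
  have hE : IsClosed E := by
    refine (hcen.preimage continuous_fst).inter ((hcen.preimage continuous_snd).inter ?_)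
    exact (repKer_closed ρ hρ).preimage
      (f := fun p : L × L => (p.2 ^ n.factorial)⁻¹ * p.1) (by fun_prop)
  have hp : IsProperMap (Prod.map (id : L → L) (ell ν)) := isProperMap_id.prodMap (ell_proper hprop)
  have hcl := hp.isClosedMap _ hE
  have hc : Continuous fun z : L => (z, ell ν z / n.factorial) :=
    continuous_id.prodMk ((ell_proper hprop).continuous.div_const _)
  convert! hcl.preimage hc using 1
  ext z
  have hf : (n.factorial : ℝ) ≠ 0 := by exact_mod_cast n.factorial_ne_zero
  constructor
  · rintro ⟨hz, y, hy, h⟩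
    refine ⟨(z, y), ⟨hz, hy, h⟩, ?_⟩
    obtain ⟨hk, -⟩ := (mem_repKer ρ _).mp h
    rw [mem_ker_iff, ell_mul, ell_inv, ell_pow] at hk
    simp only [Prod.map, id, Prod.mk.injEq, true_and]
    field_simp
    linarith
  · rintro ⟨⟨z', y⟩, ⟨hz, hy, h⟩, he⟩
    simp only [Prod.map, id, Prod.mk.injEq] at he
    obtain ⟨rfl, -⟩ := he
    exact ⟨hz, y, hy, h⟩

/-- the index type of all finite dimensional unitary representations -/
abbrev Reps (ν : L →* {x : ℝ // (0:ℝ) < x}) :=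
  Σ n : ℕ, {ρ : ν.ker →* unitary (Matrix (Fin n) (Fin n) ℂ) // Continuous ρ}

/-- the splitting subgroup -/
def Sg (ν : L →* {x : ℝ // (0:ℝ) < x}) : Subgroup L :=
  Subgroup.center L ⊓ ⨅ i : Reps ν, Zi i.2.1

theorem mem_Sg (z : L) : z ∈ Sg ν ↔ z ∈ Subgroup.center L ∧ ∀ i : Reps ν, z ∈ Zi i.2.1 := by
  simp [Sg, Subgroup.mem_inf, Subgroup.mem_iInf]

theorem Sg_closed [T2Space L] [CompactSpace ν.ker] (hprop : IsProperMap ν) :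
    IsClosed (Sg ν : Set L) := by
  have hcen : IsClosed (Subgroup.center L : Set L) := center_closed L
  have : (Sg ν : Set L) = (Subgroup.center L : Set L) ∩ ⋂ i : Reps ν, (Zi i.2.1 : Set L) := by
    ext z
    simp only [SetLike.mem_coe, Set.mem_inter_iff, Set.mem_iInter]
    exact mem_Sg z
  rw [this]
  exact hcen.inter (isClosed_iInter fun i => Zi_closed hprop _ i.2.2)

theorem Sg_surj [T2Space L] [CompactSpace ν.ker] (hprop : IsProperMap ν)
    (hZ : ∀ t, ∃ l ∈ Subgroup.center L, ell ν l = t) (t : ℝ) : ∃ z ∈ Sg ν, ell ν z = t := by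
  have hcen : IsClosed (Subgroup.center L : Set L) := center_closed L
  have hc : IsCompact (ell ν ⁻¹' {t} ∩ (Subgroup.center L : Set L)) :=
    ((ell_proper hprop).isCompact_preimage isCompact_singleton).inter_right hcen
  obtain ⟨l, ⟨hl, hlc⟩, hlF⟩ := hc.inter_iInter_nonempty (fun i : Reps ν => (Zi i.2.1 : Set L))
    (fun i => Zi_closed hprop _ i.2.2) (by
    intro u
    let M : ℕ := ∏ i ∈ u, (i.1).factorial
    have hM : (M : ℝ) ≠ 0 := by
      have : M ≠ 0 := Finset.prod_ne_zero_iff.mpr fun i _ => Nat.factorial_ne_zero _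
      exact_mod_cast this
    obtain ⟨y, hy, hyt⟩ := hZ (t / M)
    refine ⟨y ^ M, ⟨?_, pow_mem hy _⟩, ?_⟩
    · change ell ν (y ^ M) = t
      rw [ell_pow, hyt]; field_simp
    · simp only [Set.mem_iInter]
      intro i hi
      obtain ⟨c, hc⟩ : (i.1).factorial ∣ M := Finset.dvd_prod_of_mem _ hi
      refine ⟨pow_mem hy _, y ^ c, pow_mem hy _, ?_⟩
      rw [← pow_mul, mul_comm c, ← hc, inv_mul_cancel]
      exact one_mem _)
  exact ⟨l, (mem_Sg l).mpr ⟨hlc, fun i => Set.mem_iInter.mp hlF i⟩, hl⟩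

theorem Sg_inj [T2Space L] [CompactSpace ν.ker]
    (hK : (commutator ν.ker).topologicalClosure = ⊤) (z : L) (hz : z ∈ Sg ν) (h0 : ell ν z = 0) :
    z = 1 := by
  have hzK : z ∈ ν.ker := (mem_ker_iff z).mpr h0
  suffices (⟨z, hzK⟩ : ν.ker) = 1 from congrArg Subtype.val this
  refine peter_weyl _ fun n ρ hρ => ?_
  obtain ⟨-, y, hy, h⟩ := ((mem_Sg z).mp hz).2 ⟨n, ρ, hρ⟩
  obtain ⟨hk, h1⟩ := (mem_repKer ρ _).mp h
  have hk' := hk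
  have hf : (n.factorial : ℝ) ≠ 0 := by exact_mod_cast n.factorial_ne_zero
  rw [mem_ker_iff, ell_mul, ell_inv, ell_pow, h0, add_zero, neg_eq_zero] at hk'
  have hy0 : y ∈ ν.ker := (mem_ker_iff y).mpr ((mul_eq_zero.mp hk').resolve_left hf)
  have ht := central_torsion hK ρ hρ ⟨y, hy0⟩ (fun k =>
    Subtype.ext (Subgroup.mem_center_iff.mp hy k).symm)
  have e : (⟨z, hzK⟩ : ν.ker) = (⟨y, hy0⟩ : ν.ker) ^ n.factorial * ⟨_, hk⟩ := by
    apply Subtype.ext; simp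
  rw [e, map_mul, h1, mul_one, map_pow, ht]

theorem exists_section [T2Space L] [CompactSpace ν.ker] (hprop : IsProperMap ν)
    (hZ : ∀ t, ∃ l ∈ Subgroup.center L, ell ν l = t)
    (hK : (commutator ν.ker).topologicalClosure = ⊤) :
    ∃ σ : ℝ → L, Continuous σ ∧ (∀ t, ell ν (σ t) = t) ∧ (∀ t, σ t ∈ Subgroup.center L) ∧
      (∀ s t, σ (s + t) = σ s * σ t) := by
  let f : Sg ν → ℝ := fun z => ell ν z
  have hfp : IsProperMap f :=
    (ell_proper hprop).comp (Sg_closed hprop).isClosedEmbedding_subtypeVal.isProperMap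
  have hinj : Function.Injective f := by
    intro a b hab
    have := Sg_inj hK ((a : L)⁻¹ * (b : L)) (mul_mem (inv_mem a.2) b.2) (by
      rw [ell_mul, ell_inv]; change - f a + f b = 0; rw [hab]; ring)
    exact Subtype.ext (inv_mul_eq_one.mp this)
  have hsur : Function.Surjective f := fun t => by
    obtain ⟨z, hz, h⟩ := Sg_surj hprop hZ t
    exact ⟨⟨z, hz⟩, h⟩
  let h : Sg ν ≃ₜ ℝ := (Equiv.ofBijective f ⟨hinj, hsur⟩).toHomeomorphOfContinuousClosed
    hfp.continuous hfp.isClosedMap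
  have hh : ∀ t, ell ν (h.symm t) = t := fun t => h.apply_symm_apply t
  refine ⟨fun t => h.symm t, continuous_subtype_val.comp h.symm.continuous, hh,
    fun t => ((mem_Sg _).mp (h.symm t).2).1, fun s t => ?_⟩
  have : h.symm (s + t) = h.symm s * h.symm t := by
    apply hinj
    change ell ν (h.symm (s + t)) = ell ν (h.symm s * h.symm t : L)
    rw [ell_mul, hh, hh, hh]
  simp only [this]; rfl

theorem component_eq [T2Space L] [CompactSpace ν.ker] (hprop : IsProperMap ν)
    (hK : (commutator ν.ker).topologicalClosure = ⊤)
    (σ : ℝ → L) (hσ : Continuous σ) (hσe : ∀ t, ell ν (σ t) = t)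
    (hσc : ∀ t, σ t ∈ Subgroup.center L) (hσm : ∀ s t, σ (s + t) = σ s * σ t) (x : L) :
    x ∈ (Subgroup.connectedComponentOfOne ↥(Subgroup.center L)).map (Subgroup.center L).subtype ↔
      ∃ t, σ t = x := by
  have hσ0 : σ 0 = 1 := by
    have := hσm 0 0
    rw [add_zero] at this
    exact left_eq_mul.mp this
  have hell : Continuous (ell ν) := (ell_proper hprop).continuous
  constructor
  · rintro ⟨c, hc, rfl⟩
    have hc' : c ∈ connectedComponent (1 : Subgroup.center L) := hc
    have hmem : ∀ z : Subgroup.center L, (σ (ell ν z))⁻¹ * z ∈ ν.ker := fun z =>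
      div_mem_ker (hσe _)
    let pr : Subgroup.center L →* ν.ker :=
      { toFun := fun z => ⟨_, hmem z⟩
        map_one' := by apply Subtype.ext; simp [ell_one, hσ0]
        map_mul' := fun a b => by
          apply Subtype.ext
          simp only [Subgroup.coe_mul, ell_mul, hσm, mul_inv_rev]
          have h1 := Subgroup.mem_center_iff.mp (inv_mem (hσc (ell ν b))) ((σ (ell ν a))⁻¹ * a)
          calc _ = (σ (ell ν b))⁻¹ * ((σ (ell ν a))⁻¹ * a) * b := by group
            _ = _ := by rw [← h1]; group }
    have hpr : Continuous pr := by
      refine Continuous.subtype_mk ?_ _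
      have : Continuous fun z : Subgroup.center L => σ (ell ν z) :=
        hσ.comp (hell.comp continuous_subtype_val)
      exact this.inv.mul continuous_subtype_val
    have hprc : pr c = 1 := by
      refine peter_weyl _ fun n ρ hρ => ?_
      let χ : Subgroup.center L →* unitary (Matrix (Fin n) (Fin n) ℂ) := ρ.comp pr
      have hχ : Continuous χ := hρ.comp hpr
      have htor : ∀ z, χ z ^ n.factorial = 1 := by
        intro z
        refine central_torsion hK ρ hρ (pr z) fun k => Subtype.ext ?_
        have : (pr z : L) ∈ Subgroup.center L := mul_mem (inv_mem (hσc _)) z.2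
        exact (Subgroup.mem_center_iff.mp this k).symm
      have hopen : IsOpen (χ.ker : Set (Subgroup.center L)) := by
        refine Subgroup.isOpen_of_mem_nhds _ (g := 1) ?_
        have hc2 : Continuous fun z => (χ z : Matrix (Fin n) (Fin n) ℂ) :=
          continuous_subtype_val.comp hχ
        have h1 := hc2.tendsto 1
        rw [map_one, OneMemClass.coe_one] at h1
        have h2 := h1.eventually (no_small_torsion (n := n) n.factorial_ne_zero)
        filter_upwards [h2] with z hz
        have h3 := hz (by
          have := congrArg Subtype.val (htor z)
          exact this)
        exact Subtype.ext h3
      have hclopen : IsClopen (χ.ker : Set (Subgroup.center L)) :=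
        ⟨Subgroup.isClosed_of_isOpen _ hopen, hopen⟩
      exact hclopen.connectedComponent_subset (one_mem _) hc'
    have h4 := congrArg Subtype.val hprc
    exact ⟨ell ν c, inv_mul_eq_one.mp h4⟩
  · rintro ⟨t, rfl⟩
    let σ' : ℝ → Subgroup.center L := fun t => ⟨σ t, hσc t⟩
    have hσ' : Continuous σ' := hσ.subtype_mk _
    refine ⟨σ' t, ?_, rfl⟩
    have h1 : IsPreconnected (Set.range σ') := isPreconnected_range hσ'
    have h2 := h1.subset_connectedComponent (x := 1) ⟨0, Subtype.ext hσ0⟩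
    exact h2 ⟨t, rfl⟩
end split

theorem nu_open_proper {L : Type*} [Group L] [TopologicalSpace L] [IsTopologicalGroup L]
    (ν : L →* {x : ℝ // (0:ℝ) < x}) (hcont : Continuous ν)
    (hquot : IsHomeomorph ⇑(QuotientGroup.kerLift ν))
    (hcompact : IsCompact (ν.ker : Set L)) : IsOpenMap ν ∧ IsProperMap ν := by
  have e : (ν : L → {x : ℝ // (0:ℝ) < x}) =
      (QuotientGroup.kerLift ν) ∘ (QuotientGroup.mk : L → L ⧸ ν.ker) := by
    ext x; rfl
  refine ⟨?_, ?_⟩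
  · rw [e]
    exact hquot.isOpenMap.comp QuotientGroup.isOpenMap_coe
  · rw [isProperMap_iff_isClosedMap_and_compact_fibers]
    refine ⟨hcont, ?_, fun y => ?_⟩
    · rw [e]
      exact hquot.isClosedMap.comp (QuotientGroup.isClosedMap_coe hcompact)
    · by_cases h : ∃ l, ν l = y
      · obtain ⟨l, rfl⟩ := h
        have : (ν ⁻¹' {ν l}) = (fun k => l * k) '' (ν.ker : Set L) := by
          ext x
          constructor
          · intro hx
            have hx' : ν x = ν l := hx
            exact ⟨l⁻¹ * x, by simp [MonoidHom.mem_ker, hx'], by simp⟩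
          · rintro ⟨k, hk, rfl⟩
            have hk' : ν k = 1 := hk
            simp [hk']
        rw [this]
        exact hcompact.image (continuous_const.mul continuous_id)
      · have : ν ⁻¹' {y} = ∅ := by
          ext x; simp only [Set.mem_preimage, Set.mem_singleton_iff, Set.mem_empty_iff_false, iff_false]
          exact fun hx => h ⟨x, hx⟩
        rw [this]; exact isCompact_empty

theorem polar {L : Type*} [Group L] [TopologicalSpace L] [IsTopologicalGroup L]
    [T2Space L] (ν : L →* {x : ℝ // (0:ℝ) < x}) (hcont : Continuous ⇑ν)
    (hsurj : Function.Surjective ⇑ν)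
    (hker : ν.ker = (commutator L).topologicalClosure)
    (hquot : IsHomeomorph ⇑(QuotientGroup.kerLift ν))
    (hcompact : IsCompact (ν.ker : Set L)) (C : Subgroup L)
    (hC : C = (Subgroup.connectedComponentOfOne ↥(Subgroup.center L)).map
      (Subgroup.center L).subtype) :
    ((C : Set L) ∩ (ν.ker : Set L) = {1}) ∧
      (∀ x : L, ∃ c ∈ C, ∃ k ∈ ν.ker, x = c * k) ∧
      (∀ p q : ↥C × ↥ν.ker,
        (((p * q).1 : L) * ((p * q).2 : L)) =
          ((p.1 : L) * (p.2 : L)) * ((q.1 : L) * (q.2 : L))) ∧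
      IsHomeomorph (fun p : ↥C × ↥ν.ker => (p.1 : L) * (p.2 : L)) ∧
      IsHomeomorph (fun c : ↥C => ν (c : L)) ∧
      (commutator ↥ν.ker).topologicalClosure = ⊤ := by
  obtain ⟨hopen, hprop⟩ := nu_open_proper ν hcont hquot hcompact
  have : CompactSpace ν.ker := isCompact_iff_compactSpace.mp hcompact
  have hZ := exists_center hopen hprop hsurj
  have hK := ker_perfect hZ hker
  obtain ⟨σ, hσ, hσe, hσc, hσm⟩ := exists_section hprop hZ hK
  have hmem : ∀ x, x ∈ C ↔ ∃ t, σ t = x := by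
    intro x; rw [hC]; exact component_eq hprop hK σ hσ hσe hσc hσm x
  have hσ0 : σ 0 = 1 := by
    have := hσm 0 0
    rw [add_zero] at this
    exact left_eq_mul.mp this
  have hell : Continuous (ell ν) := (ell_proper hprop).continuous
  have hCs : ∀ c ∈ C, σ (ell ν c) = c := by
    intro c hc
    obtain ⟨t, rfl⟩ := (hmem c).mp hc
    rw [hσe]
  have hσC : ∀ t, σ t ∈ C := fun t => (hmem _).mpr ⟨t, rfl⟩
  have hk : ∀ x : L, (σ (ell ν x))⁻¹ * x ∈ ν.ker := fun x => div_mem_ker (hσe _)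
  refine ⟨?_, fun x => ⟨_, hσC (ell ν x), _, hk x, by group⟩, ?_, ?_, ?_, hK⟩
  · ext x
    constructor
    · rintro ⟨hx, hxk⟩
      have h0 : ell ν x = 0 := (mem_ker_iff x).mp hxk
      have := hCs x hx
      rw [h0, hσ0] at this
      exact this.symm
    · rintro rfl
      exact ⟨one_mem _, one_mem _⟩
  · rintro ⟨⟨c, hc⟩, k⟩ ⟨⟨d, hd⟩, k'⟩
    obtain ⟨t, rfl⟩ := (hmem d).mp hd
    have h1 := Subgroup.mem_center_iff.mp (hσc t) (k : L)
    change c * σ t * ((k : L) * k') = c * k * (σ t * k')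
    calc _ = c * (σ t * (k : L)) * k' := by group
      _ = _ := by rw [← h1]; group
  · let e : ↥C × ↥ν.ker ≃ₜ L :=
      { toFun := fun p => (p.1 : L) * (p.2 : L)
        invFun := fun x => (⟨_, hσC (ell ν x)⟩, ⟨_, hk x⟩)
        left_inv := by
          rintro ⟨⟨c, hc⟩, ⟨k, hkk⟩⟩
          have h0 : ell ν k = 0 := (mem_ker_iff k).mp hkk
          have h1 : σ (ell ν (c * k)) = c := by
            rw [ell_mul, h0, add_zero, hCs c hc]
          apply Prod.ext <;> apply Subtype.ext
          · exact h1
          · change (σ (ell ν (c * k)))⁻¹ * (c * k) = k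
            rw [h1]; group
        right_inv := fun x => by simp
        continuous_toFun := by fun_prop
        continuous_invFun := by
          have h1 : Continuous fun x => σ (ell ν x) := hσ.comp hell
          exact (h1.subtype_mk _).prodMk ((h1.inv.mul continuous_id).subtype_mk _) }
    exact e.isHomeomorph
  · let e : ↥C ≃ₜ {x : ℝ // (0:ℝ) < x} :=
      { toFun := fun c => ν (c : L)
        invFun := fun x => ⟨_, hσC (lg x)⟩
        left_inv := by
          rintro ⟨c, hc⟩
          exact Subtype.ext (hCs c hc)
        right_inv := fun x => lg.injective (hσe (lg x))
        continuous_toFun := hcont.comp continuous_subtype_val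
        continuous_invFun := (hσ.comp lg.continuous).subtype_mk _ }
    exact e.isHomeomorph

end Helpers

/-- Polar decomposition: if `L` is a locally compact Hausdorff topological group and
`ν : L → ℝ_{>0}` is a continuous surjective homomorphism such that (a) `ker ν` is the closure
`D(L)` of the commutator subgroup, (b) the induced isomorphism `L / ker ν → ℝ_{>0}` is a
homeomorphism, and (c) `ker ν` is compact, then, `C` denoting the identity component of the
center of `L`: (i) `C ∩ ker ν = {1}`, `L = C ⬝ ker ν`, and the multiplication map
`C × ker ν → L` is an isomorphism of topological groups; (ii) `ν` restricts to an isomorphism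
of topological groups `C → ℝ_{>0}`; (iii) `D(ker ν) = ker ν`. -/
theorem statement3 {L : Type*} [Group L] [TopologicalSpace L] [IsTopologicalGroup L]
    [LocallyCompactSpace L] [T2Space L]
    (ν : L →* PosReal) (hcont : Continuous ⇑ν) (hsurj : Function.Surjective ⇑ν)
    (hker : ν.ker = (commutator L).topologicalClosure)
    (hquot : IsHomeomorph ⇑(QuotientGroup.kerLift ν))
    (hcompact : IsCompact (ν.ker : Set L)) :
    ((centerIdentityComponent L : Set L) ∩ (ν.ker : Set L) = {1}) ∧
      (∀ x : L, ∃ c ∈ centerIdentityComponent L, ∃ k ∈ ν.ker, x = c * k) ∧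
      (∀ p q : ↥(centerIdentityComponent L) × ↥ν.ker,
        (((p * q).1 : L) * ((p * q).2 : L)) =
          ((p.1 : L) * (p.2 : L)) * ((q.1 : L) * (q.2 : L))) ∧
      IsHomeomorph (fun p : ↥(centerIdentityComponent L) × ↥ν.ker =>
        (p.1 : L) * (p.2 : L)) ∧
      IsHomeomorph (fun c : ↥(centerIdentityComponent L) => ν (c : L)) ∧
      (commutator ↥ν.ker).topologicalClosure = ⊤ := by
  exact polar ν hcont hsurj hker hquot hcompact _ rfl
end
end

section
/- Let K be a compact Hausdorff topological group such that the closure of the commutator subgroup of K equals K itself. Then the center of K is totally disconnected; being compact, it is therefore a profinite group. -/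
namespace CenterAux

open MeasureTheory Module

variable {K : Type*} [Group K] [TopologicalSpace K]
variable {H : Type*} [NormedAddCommGroup H] [InnerProductSpace ℂ H]

/-- Every continuous character of `K` on a finite-dimensional invariant subspace is trivial;
so an element acting by a scalar acts by a root of unity. -/
lemma pow_finrank_eq_one [IsTopologicalGroup K] (hK : (commutator K).topologicalClosure = ⊤)
    (U : K →* (H →L[ℂ] H)) (hc : ∀ v, Continuous fun k => U k v)
    (W : Submodule ℂ H) [FiniteDimensional ℂ W] (hW : ∀ k, ∀ w ∈ W, U k w ∈ W)
    (z : K) (c : ℂ) (hz : ∀ w ∈ W, U z w = c • w) : c ^ finrank ℂ W = 1 := by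
  let ρ : K →* (W →ₗ[ℂ] W) :=
    { toFun := fun k => (U k : H →ₗ[ℂ] H).restrict (hW k)
      map_one' := by ext w; simp
      map_mul' := fun a b => by ext w; simp }
  let d : K →* ℂ := (LinearMap.det : (W →ₗ[ℂ] W) →* ℂ).comp ρ
  have hd : Continuous d := by
    let b := finBasis ℂ W
    have h1 : ∀ k, d k = (LinearMap.toMatrix b b (ρ k)).det := fun k =>
      (LinearMap.det_toMatrix b (ρ k)).symm
    have h2 : (d : K → ℂ) = fun k => (LinearMap.toMatrix b b (ρ k)).det := funext h1
    rw [h2]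
    refine Continuous.matrix_det ?_
    refine continuous_matrix fun i j => ?_
    simp only [LinearMap.toMatrix_apply]
    have h3 : Continuous fun k => ρ k (b j) := by
      refine Continuous.subtype_mk (hc (b j)) _
    exact (LinearMap.continuous_of_finiteDimensional (b.coord i)).comp h3
  let d' : K →* ℂˣ := d.toHomUnits
  have h4 : commutator K ≤ d'.ker := Abelianization.commutator_subset_ker d'
  have h5 : ∀ k ∈ commutator K, d k = 1 := fun k hk => by
    have := h4 hk
    rw [MonoidHom.mem_ker] at this
    have := congrArg Units.val this
    simpa [d'] using this
  have h6 : d z = 1 := by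
    have hz' : z ∈ closure (commutator K : Set K) := by
      rw [← Subgroup.topologicalClosure_coe, hK]; trivial
    have hcl : IsClosed {k | d k = 1} := isClosed_eq hd continuous_const
    exact closure_minimal (fun k hk => h5 k hk) hcl hz'
  have h7 : ρ z = c • LinearMap.id := by
    ext w; simpa [ρ] using hz w w.2
  have h8 : d z = LinearMap.det (ρ z) := rfl
  rw [h8, h7, LinearMap.det_smul, LinearMap.det_id, mul_one] at h6
  exact h6

lemma exists_fixed [IsTopologicalGroup K] (hK : (commutator K).topologicalClosure = ⊤)
    (U : K →* (H →L[ℂ] H)) (hc : ∀ v, Continuous fun k => U k v)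
    (C : Set K) (hC : IsPreconnected C) (h1 : 1 ∈ C) (hcen : ∀ z ∈ C, ∀ k, z * k = k * z)
    (n : ℕ) (E : Submodule ℂ H) [FiniteDimensional ℂ E] (hE : ∀ k, ∀ w ∈ E, U k w ∈ E)
    (hn : finrank ℂ E = n)
    (hE0 : E ≠ ⊥) : ∃ v ∈ E, v ≠ 0 ∧ ∀ z ∈ C, U z v = v := by
  induction n using Nat.strong_induction_on generalizing E with
  | _ n ih =>
  have hnt : Nontrivial E := Submodule.nontrivial_iff_ne_bot.2 hE0
  by_cases hs : ∀ z ∈ C, ∃ c : ℂ, ∀ w ∈ E, U z w = c • w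
  · choose! χ hχ using hs
    obtain ⟨v, hv, hv0⟩ := E.ne_bot_iff.1 hE0
    refine ⟨v, hv, hv0, ?_⟩
    have hpow : ∀ z ∈ C, χ z ^ finrank ℂ E = 1 := fun z hz =>
      pow_finrank_eq_one hK U hc E hE z (χ z) (hχ z hz)
    have hvv : inner ℂ v v ≠ 0 := inner_self_ne_zero.2 hv0
    have hχe : ∀ z ∈ C, χ z = inner ℂ v (U z v) / inner ℂ v v := fun z hz => by
      rw [hχ z hz v hv, inner_smul_right, mul_div_assoc, div_self hvv, mul_one]
    have hcont : ContinuousOn χ C := by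
      refine ContinuousOn.congr (Continuous.continuousOn ?_) hχe
      exact (continuous_const.inner (hc v)).div_const _
    have hfin : {c : ℂ | c ^ finrank ℂ E = 1}.Finite := by
      have hpos : 0 < finrank ℂ E := finrank_pos
      refine Set.Finite.subset (Polynomial.nthRootsFinset (finrank ℂ E) (1 : ℂ)).finite_toSet ?_
      intro c hc
      simpa [Polynomial.mem_nthRootsFinset hpos] using hc
    have hsub : (χ '' C).Subsingleton :=
      hfin.countable.isTotallyDisconnected _ (by rintro _ ⟨z, hz, rfl⟩; exact hpow z hz) (hC.image χ hcont)
    have hχ1 : χ 1 = 1 := by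
      rw [hχe 1 h1]; simp [hv0]
    intro z hz
    rw [hχ z hz v hv, hsub ⟨z, hz, rfl⟩ ⟨1, h1, rfl⟩, hχ1, one_smul]
  · push Not at hs
    obtain ⟨z, hz, hs⟩ := hs
    let T : End ℂ E := (U z : H →ₗ[ℂ] H).restrict (hE z)
    obtain ⟨c, hcE⟩ := End.exists_eigenvalue T
    obtain ⟨e, he⟩ := hcE.exists_hasEigenvector
    let W : Submodule ℂ H := E ⊓ LinearMap.ker ((U z : H →ₗ[ℂ] H) - c • LinearMap.id)
    have hWmem : ∀ w, w ∈ W ↔ w ∈ E ∧ U z w = c • w := fun w => by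
      simp [W, sub_eq_zero]
    have hWE : W ≤ E := inf_le_left
    have hlt : W < E := by
      refine lt_of_le_of_ne hWE fun h => ?_
      obtain ⟨w, hw, hne⟩ := hs c
      rw [← h] at hw
      exact hne ((hWmem w).1 hw).2
    have : FiniteDimensional ℂ W := Submodule.finiteDimensional_of_le hWE
    have hW0 : W ≠ ⊥ := by
      refine W.ne_bot_iff.2 ⟨e, (hWmem _).2 ⟨e.2, ?_⟩, ?_⟩
      · have := congrArg Subtype.val he.apply_eq_smul
        simpa [T] using this
      · simpa using he.2
    have hWi : ∀ k, ∀ w ∈ W, U k w ∈ W := fun k w hw => by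
      obtain ⟨hw1, hw2⟩ := (hWmem w).1 hw
      refine (hWmem _).2 ⟨hE k w hw1, ?_⟩
      have : U z (U k w) = U k (U z w) := by
        rw [← mul_apply_eq_comp, ← map_mul, hcen z hz k, map_mul,
          mul_apply_eq_comp]
      rw [this, hw2, map_smul]
    obtain ⟨v, hv, h⟩ := ih (finrank ℂ W) (hn ▸ Submodule.finrank_lt_finrank_of_lt hlt) W hWi rfl hW0
    exact ⟨v, hWE hv, h⟩

lemma acts_trivially [IsTopologicalGroup K] [CompactSpace K] [T2Space K] [CompleteSpace H]
    (hK : (commutator K).topologicalClosure = ⊤)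
    (U : K →* (H →L[ℂ] H)) (hc : ∀ v, Continuous fun k => U k v)
    (hU : ∀ k v w, inner ℂ (U k v) (U k w) = inner ℂ v w)
    (C : Set K) (hC : IsPreconnected C) (h1 : 1 ∈ C) (hcen : ∀ z ∈ C, ∀ k, z * k = k * z)
    (z : K) (hz : z ∈ C) (v : H) : U z v = v := by
  let Fix : Submodule ℂ H := ⨅ z ∈ C, LinearMap.ker ((U z : H →ₗ[ℂ] H) - LinearMap.id)
  have hFix : ∀ v, v ∈ Fix ↔ ∀ z ∈ C, U z v = v := fun v => by
    simp [Fix, sub_eq_zero]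
  have hFixc : IsClosed (Fix : Set H) := by
    have : (Fix : Set H) = ⋂ z ∈ C, {v | U z v = v} := by
      ext v; simp [hFix]
    rw [this]
    exact isClosed_biInter fun z _ => isClosed_eq (U z).continuous continuous_id
  have : CompleteSpace Fix := hFixc.completeSpace_coe
  by_contra hne
  have hFt : Fixᗮ ≠ ⊥ := by
    intro h
    rw [Submodule.orthogonal_eq_bot_iff] at h
    exact hne ((hFix v).1 (h ▸ Submodule.mem_top) z hz)
  obtain ⟨F, hF, hF0⟩ := Fixᗮ.ne_bot_iff.1 hFt
  -- adjoint relation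
  have hmul : ∀ a b v, U a (U b v) = U (a * b) v := fun a b v => by
    rw [map_mul, mul_apply_eq_comp]
  have hUi : ∀ k v w, inner ℂ v (U k w) = inner ℂ (U k⁻¹ v) w := fun k v w => by
    rw [← hU k (U k⁻¹ v) w, hmul]; simp
  borelize K
  let μ : Measure K := Measure.haarMeasure ⊤
  have : IsProbabilityMeasure μ := ⟨by
    have := Measure.haarMeasure_self (K₀ := (⊤ : TopologicalSpace.PositiveCompacts K))
    simpa [μ] using this⟩
  let R : K → (H →L[ℂ] H) := fun x => InnerProductSpace.rankOne ℂ (U x F) (U x F)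
  have hR : Continuous R := by
    exact (ContinuousLinearMap.smulRightL ℂ H H).continuous₂.comp
      (((innerSL ℂ).continuous.comp (hc F)).prodMk (hc F))
  have hRi : Integrable R μ := hR.integrable_of_hasCompactSupport (HasCompactSupport.of_compactSpace R)
  let A : H →L[ℂ] H := ∫ x, R x ∂μ
  have hAv : ∀ v, A v = ∫ x, inner ℂ (U x F) v • U x F ∂μ := fun v =>
    ContinuousLinearMap.integral_apply hRi v
  have hRvi : ∀ v, Integrable (fun x => inner ℂ (U x F) v • U x F) μ := fun v =>
    (hRi.apply_continuousLinearMap v)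
  have hin : ∀ w v, inner ℂ w (A v) = ∫ x, inner ℂ (U x F) v * inner ℂ w (U x F) ∂μ := fun w v => by
    rw [hAv, ← integral_inner (hRvi v)]
    simp only [inner_smul_right]
  have hAc : IsCompactOperator A := by
    have hconv : Convex ℝ {f : H →L[ℂ] H | IsCompactOperator f} := by
      intro f hf g hg a b _ _ _
      exact (IsCompactOperator.smul hf a).add (IsCompactOperator.smul hg b)
    refine hconv.integral_mem isClosed_setOfPred_isCompactOperator (ae_of_all _ fun x => ?_) hRi
    show IsCompactOperator (InnerProductSpace.rankOne ℂ (U x F) (U x F))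
    rw [InnerProductSpace.rankOne_def']
    exact (isCompactOperator_of_locallyCompactSpace_rng
      (ContinuousLinearMap.toSpanSingleton ℂ (U x F))).comp_clm _
  have hAs : A.IsSymmetric := by
    intro v w
    show inner ℂ (A v) w = inner ℂ v (A w)
    rw [← inner_conj_symm, hin, hin, ← integral_conj]
    congr 1; ext x
    rw [map_mul, inner_conj_symm, inner_conj_symm, mul_comm]
  have hAU : ∀ k v, A (U k v) = U k (A v) := fun k v => by
    refine ext_inner_left ℂ fun w => ?_
    rw [hUi k w, hin, hin, ← integral_mul_left_eq_self _ k]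
    congr 1; ext x
    rw [← hmul, hU, hUi k w]
  have hA0 : A ≠ 0 := by
    intro h0
    have e1 : inner ℂ F (A F) = 0 := by rw [h0]; simp
    rw [hin] at e1
    have e2 : ∀ x, inner ℂ (U x F) F * inner ℂ F (U x F) =
        ((‖inner ℂ (U x F) F‖ ^ 2 : ℝ) : ℂ) := fun x => by
      rw [← inner_conj_symm F (U x F), RCLike.mul_conj]; norm_cast
    simp_rw [e2] at e1
    have e3 : ∫ x, ‖inner ℂ (U x F) F‖ ^ 2 ∂μ = 0 := by
      have e5 := (integral_ofReal (𝕜 := ℂ) (μ := μ)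
        (f := fun x => ‖inner ℂ (U x F) F‖ ^ 2)).symm.trans e1
      exact RCLike.ofReal_eq_zero.1 e5
    have e4 : 0 < ∫ x, ‖inner ℂ (U x F) F‖ ^ 2 ∂μ := by
      refine Continuous.integral_pos_of_hasCompactSupport_nonneg_nonzero (x := (1 : K)) ?_
        (HasCompactSupport.of_compactSpace _) (fun x => by positivity) ?_
      · have := hc F
        fun_prop
      · simpa using hF0
    exact e4.ne' e3
  have hex : ∃ c : ℂ, End.HasEigenvalue (A : End ℂ H) c ∧ c ≠ 0 := by
    by_contra! h
    exact hA0 ((ContinuousLinearMap.eq_zero_of_forall_hasEigenvalue_eq_zero hAc hAs).1 h)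
  obtain ⟨c, hce, hc0⟩ := hex
  have := ContinuousLinearMap.finite_dimensional_eigenspace hAc c hc0
  obtain ⟨w, hwE, hw0, hwf⟩ := exists_fixed hK U hc C hC h1 hcen _
    (End.eigenspace (A : End ℂ H) c) (fun k w hw => by
      rw [End.mem_eigenspace_iff] at hw ⊢
      have hw' : A w = c • w := hw
      show A (U k w) = c • U k w
      rw [hAU, hw', map_smul]) rfl hce
  have hw' : A w = c • w := End.mem_eigenspace_iff.1 hwE
  have hwF : w ∈ Fix := (hFix w).2 hwf
  have e1 : inner ℂ w (A w) = 0 := by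
    rw [hin]
    have : ∀ x, inner ℂ w (U x F) = 0 := fun x => by
      rw [hUi]
      refine (Submodule.mem_orthogonal _ _).1 hF _ ((hFix _).2 fun z hz => ?_)
      rw [hmul, hcen z hz, ← hmul, hwf z hz]
    simp [this]
  rw [hw', inner_smul_right] at e1
  rcases mul_eq_zero.1 e1 with h | h
  · exact hc0 h
  · exact hw0 (inner_self_eq_zero.1 h)

lemma eq_one_of_preconnected [IsTopologicalGroup K] [CompactSpace K] [T2Space K]
    (hK : (commutator K).topologicalClosure = ⊤)
    (C : Set K) (hC : IsPreconnected C) (h1 : 1 ∈ C) (hcen : ∀ z ∈ C, ∀ k, z * k = k * z)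
    (z : K) (hz : z ∈ C) : z = 1 := by
  borelize K
  let μ : Measure K := Measure.haarMeasure ⊤
  have : Fact ((2 : ENNReal) ≠ ⊤) := ⟨by simp⟩
  let L := Lp ℂ 2 μ
  let U : K →* (L →L[ℂ] L) :=
    { toFun := fun k =>
        { toFun := fun f => DomMulAct.mk k⁻¹ • f
          map_add' := fun f g => smul_add _ _ _
          map_smul' := fun c f => smul_comm _ _ _
          cont := continuous_const_smul _ }
      map_one' := by
        ext1 f
        show DomMulAct.mk (1 : K)⁻¹ • f = f
        rw [inv_one, DomMulAct.mk_one, one_smul]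
      map_mul' := fun a b => by
        ext1 f
        show DomMulAct.mk (a * b)⁻¹ • f = DomMulAct.mk a⁻¹ • DomMulAct.mk b⁻¹ • f
        rw [mul_inv_rev, DomMulAct.mk_mul, mul_smul] }
  have hUa : ∀ k f, U k f = DomMulAct.mk k⁻¹ • f := fun _ _ => rfl
  have hc : ∀ f, Continuous fun k => U k f := fun f => by
    have : Continuous fun k : K => DomMulAct.mk k⁻¹ :=
      DomMulAct.continuous_mk.comp continuous_inv
    exact this.smul continuous_const
  have hU : ∀ k f g, inner ℂ (U k f) (U k g) = inner ℂ f g := fun k f g => by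
    let V : L →ₗᵢ[ℂ] L := ⟨(U k : L →ₗ[ℂ] L), fun f => DomMulAct.norm_smul_Lp _ f⟩
    exact V.inner_map_map f g
  by_contra hne
  obtain ⟨f, hf0, hf1, -⟩ := exists_continuous_zero_one_of_isClosed
    (isClosed_singleton (x := z⁻¹)) (isClosed_singleton (x := (1 : K)))
    (by simpa using hne)
  let g : C(K, ℂ) := ⟨fun x => (f x : ℂ), by fun_prop⟩
  let g' : C(K, ℂ) := ⟨fun x => g (z⁻¹ * x), by fun_prop⟩
  have e := acts_trivially hK U hc hU C hC h1 hcen z hz (ContinuousMap.toLp 2 μ ℂ g)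
  have e' : U z (ContinuousMap.toLp 2 μ ℂ g) = ContinuousMap.toLp 2 μ ℂ g' := rfl
  rw [e'] at e
  have e2 := ContinuousMap.toLp_injective (𝕜 := ℂ) (p := 2) μ e
  have e3 := congrArg (fun h : C(K, ℂ) => h 1) e2
  have a0 : f z⁻¹ = 0 := hf0 rfl
  have a1 : f 1 = 1 := hf1 rfl
  simp [g', g, a0, a1] at e3

end CenterAux

/-- If `K` is a compact Hausdorff topological group which equals the closure of its own
commutator subgroup, then its center is totally disconnected; being compact (and Hausdorff),
it is therefore a profinite group. -/
theorem statement4 (K : Type*) [Group K] [TopologicalSpace K] [IsTopologicalGroup K]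
    [CompactSpace K] [T2Space K]
    (hK : (commutator K).topologicalClosure = ⊤) :
    TotallyDisconnectedSpace ↥(Subgroup.center K) ∧
      CompactSpace ↥(Subgroup.center K) ∧ T2Space ↥(Subgroup.center K) := by
  refine ⟨⟨fun t _ ht => fun x hx y hy => ?_⟩, ?_, inferInstance⟩
  · have hs : IsPreconnected ((fun a : Subgroup.center K => (x : K)⁻¹ * (a : K)) '' t) :=
      ht.image _ (by fun_prop)
    have := CenterAux.eq_one_of_preconnected hK _ hs ⟨x, hx, by simp⟩
      (by
        rintro _ ⟨a, -, rfl⟩ k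
        exact ((Subgroup.mem_center_iff.1 (x⁻¹ * a).2 k)).symm)
      _ ⟨y, hy, rfl⟩
    exact Subtype.ext (inv_mul_eq_one.1 this)
  · have : IsClosed (Subgroup.center K : Set K) := by
      have h : (Subgroup.center K : Set K) = ⋂ g : K, {z | g * z = z * g} := by
        ext z; simp [Subgroup.mem_center_iff]
      rw [h]
      exact isClosed_iInter fun g => isClosed_eq (by fun_prop) (by fun_prop)
    exact isCompact_iff_compactSpace.1 this.isCompact
end

section
/- Let G and G' be locally compact Hausdorff topological groups, and let ι : G → G' be a continuous group homomorphism whose image ι(G) is a normal subgroup of G'. Let K ⊆ G and K' ⊆ G' be compact open subgroups with ι⁻¹(K') = K. Equip G and G' with left Haar measures μ and μ' normalized so that μ(K) = 1 and μ'(K') = 1. Then for every locally constant, compactly supported function ψ : G' → ℂ which is right K'-invariant (ψ(x k') = ψ(x) for all x ∈ G', k' ∈ K') and which vanishes outside the open subgroup ι(G)·K', one has ∫_{G'} ψ(g) dμ'(g) = ∫_{G} ψ(ι(h)) dμ(h). -/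
open MeasureTheory
open scoped Pointwise

/-- Let `ι : G → G'` be a continuous homomorphism of locally compact Hausdorff topological
groups with normal image, `K ⊆ G` and `K' ⊆ G'` compact open subgroups with `ι⁻¹(K') = K`,
and let `μ`, `μ'` be left Haar measures normalized by `μ(K) = 1`, `μ'(K') = 1`. Then for every
locally constant, compactly supported, right `K'`-invariant function `ψ : G' → ℂ` vanishing
outside `ι(G)·K'`, one has `∫_{G'} ψ dμ' = ∫_{G} (ψ ∘ ι) dμ`. -/
theorem statement5 {G G' : Type*}
    [Group G] [TopologicalSpace G] [IsTopologicalGroup G] [LocallyCompactSpace G] [T2Space G]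
    [MeasurableSpace G] [BorelSpace G]
    [Group G'] [TopologicalSpace G'] [IsTopologicalGroup G'] [LocallyCompactSpace G'] [T2Space G']
    [MeasurableSpace G'] [BorelSpace G']
    (ι : G →* G') (hcont : Continuous ⇑ι) (hnormal : ι.range.Normal)
    (K : Subgroup G) (K' : Subgroup G')
    (hKcompact : IsCompact (K : Set G)) (hKopen : IsOpen (K : Set G))
    (hK'compact : IsCompact (K' : Set G')) (hK'open : IsOpen (K' : Set G'))
    (hpre : K'.comap ι = K)
    (μ : Measure G) (μ' : Measure G')
    [μ.IsHaarMeasure] [μ'.IsHaarMeasure] [μ.Regular] [μ'.Regular]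
    (hμK : μ (K : Set G) = 1) (hμ'K' : μ' (K' : Set G') = 1)
    (ψ : G' → ℂ) (hψloc : IsLocallyConstant ψ) (hψsupp : HasCompactSupport ψ)
    (hψinv : ∀ x : G', ∀ k ∈ K', ψ (x * k) = ψ x)
    (hψvanish : ∀ x : G', x ∉ (ι.range : Set G') * (K' : Set G') → ψ x = 0) :
    ∫ g, ψ g ∂μ' = ∫ h, ψ (ι h) ∂μ := by
  classical
  haveI : DiscreteTopology (G' ⧸ K') := QuotientGroup.discreteTopology hK'open
  let A : G' ⧸ K' → Set G' := fun q => {g | (g : G' ⧸ K') = q}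
  have hA : ∀ x : G', A (x : G' ⧸ K') = (fun g => x⁻¹ * g) ⁻¹' (K' : Set G') := by
    intro x
    ext g
    simp only [A, Set.mem_setOf_eq, Set.mem_preimage, SetLike.mem_coe]
    rw [eq_comm, QuotientGroup.eq]
  have hout : ∀ g : G', ψ ((g : G' ⧸ K').out) = ψ g := by
    intro g
    obtain ⟨k, hk⟩ := QuotientGroup.mk_out_eq_mul K' g
    rw [hk, hψinv g k k.2]
  have hAopen : ∀ q, IsOpen (A q) := by
    intro q
    exact (isOpen_discrete {q}).preimage (QuotientGroup.continuous_mk (N := K'))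
  have hμA : ∀ q, μ' (A q) = 1 := by
    intro q
    induction q using QuotientGroup.induction_on with
    | H x => rw [hA, measure_preimage_mul, hμ'K']
  have hμB : ∀ q, ψ q.out ≠ 0 → μ (ι ⁻¹' A q) = 1 := by
    intro q hq
    have hmem : q.out ∈ (ι.range : Set G') * (K' : Set G') := by
      by_contra h
      exact hq (hψvanish _ h)
    obtain ⟨_, ⟨h, rfl⟩, k, hk, hhk⟩ := hmem
    have hqh : q = ((ι h : G') : G' ⧸ K') := by
      rw [← q.out_eq']
      change ((q.out : G') : G' ⧸ K') = _
      rw [← hhk]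
      exact QuotientGroup.mk_mul_of_mem _ hk
    have : ι ⁻¹' A q = (fun g => h⁻¹ * g) ⁻¹' (K : Set G) := by
      rw [hqh, hA, ← hpre]
      ext g
      simp
    rw [this, measure_preimage_mul, hμK]
  have hfin : (((↑) : G' → G' ⧸ K') '' tsupport ψ).Finite :=
    (hψsupp.isCompact.image QuotientGroup.continuous_mk).finite_of_discrete
  let S := hfin.toFinset.filter (fun q => ψ q.out ≠ 0)
  have hsum : ∀ g, ψ g = ∑ q ∈ S, (A q).indicator (fun _ => ψ q.out) g := by
    intro g
    simp only [Set.indicator_apply, A, Set.mem_setOf_eq]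
    rw [Finset.sum_ite_eq, hout]
    split_ifs with h
    · rfl
    · by_contra h0
      refine h (Finset.mem_filter.2 ⟨hfin.mem_toFinset.2 ⟨g, subset_tsupport _ h0, rfl⟩, ?_⟩)
      rwa [hout]
  have h1 : ∫ g, ψ g ∂μ' = ∑ q ∈ S, ψ q.out := by
    rw [integral_congr_ae (Filter.Eventually.of_forall hsum), integral_finset_sum]
    · refine Finset.sum_congr rfl fun q _ => ?_
      rw [integral_indicator_const _ (hAopen q).measurableSet, measureReal_def, hμA]
      simp
    · intro q _
      refine (integrable_indicator_iff (hAopen q).measurableSet).2 (integrableOn_const ?_)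
      simp [hμA]
  have h2 : ∫ h, ψ (ι h) ∂μ = ∑ q ∈ S, ψ q.out := by
    have hs : ∀ h, ψ (ι h) = ∑ q ∈ S, (ι ⁻¹' A q).indicator (fun _ => ψ q.out) h :=
      fun h => hsum (ι h)
    have hm : ∀ q, MeasurableSet (ι ⁻¹' A q) := fun q => ((hAopen q).preimage hcont).measurableSet
    rw [integral_congr_ae (Filter.Eventually.of_forall hs), integral_finset_sum]
    · refine Finset.sum_congr rfl fun q hq => ?_
      rw [integral_indicator_const _ (hm q), measureReal_def, hμB q (Finset.mem_filter.1 hq).2]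
      simp
    · intro q hq
      refine (integrable_indicator_iff (hm q)).2 (integrableOn_const ?_)
      simp [hμB q (Finset.mem_filter.1 hq).2]
  rw [h1, h2]
end

section
/- Let n ≥ 1 and let M be a symmetric n × n matrix with integer entries all of whose diagonal entries are even. If det M = 1 or det M = −1, then n is even. If det M = 2 or det M = −2, then n is odd. -/
open Matrix in
lemma aux_main (n : ℕ) : ∀ (ι : Type) [Fintype ι] [DecidableEq ι] (M : Matrix ι ι (ZMod 4)),
    Fintype.card ι = n → M.IsSymm → (∀ i, 2 * M i i = 0) →
    (Odd n → 2 * M.det = 0) ∧ (Even n → M.det ≠ 2) := by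
  induction n using Nat.strong_induction_on with
  | _ n ih =>
  intro ι _ _ M hc hs hd
  by_cases h : ∀ i j, 2 * M i j = 0
  · have hev : ∀ x : ZMod 4, 2 * x = 0 → ∃ y, x = 2 * y := by decide
    choose N hN using fun i j => hev _ (h i j)
    have hM : M = (2 : ZMod 4) • (Matrix.of N) := by
      ext i j
      simp [hN]
    have hdet : M.det = 2 ^ n * (Matrix.of N).det := by
      rw [hM, Matrix.det_smul, hc]
    have h4 : (2 : ZMod 4) * 2 = 0 := by decide
    constructor
    · rintro ⟨k, rfl⟩
      rw [hdet, pow_succ, mul_comm (2 ^ (2 * k)), ← mul_assoc, ← mul_assoc, h4]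
      simp
    · rintro ⟨k, rfl⟩
      rcases k with _ | k
      · have : IsEmpty ι := Fintype.card_eq_zero_iff.mp hc
        rw [Matrix.det_isEmpty]
        decide
      · rw [hdet, show k + 1 + (k + 1) = 2 * k + 2 by ring, pow_add, pow_two 2, h4]
        simp only [mul_zero, zero_mul]
        decide
  · push Not at h
    obtain ⟨i, j, hij⟩ := h
    have hne : i ≠ j := by
      rintro rfl
      exact hij (hd i)
    have hinj : Function.Injective (![i, j] : Fin 2 → ι) := by
      intro a b
      fin_cases a <;> fin_cases b <;> simp [hne, hne.symm]
    classical
    let κ : Type := ((Set.range (![i, j] : Fin 2 → ι))ᶜ : Set ι)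
    let e : Fin 2 ⊕ κ ≃ ι :=
      ((Equiv.ofInjective _ hinj).sumCongr (Equiv.refl _)).trans
        (Equiv.Set.sumCompl (Set.range (![i, j] : Fin 2 → ι)))
    have e0 : e (Sum.inl 0) = i := rfl
    have e1 : e (Sum.inl 1) = j := rfl
    have hcard : Fintype.card κ + 2 = n := by
      rw [← hc, ← Fintype.card_congr e, Fintype.card_sum, Fintype.card_fin, add_comm]
    let P : Matrix (Fin 2 ⊕ κ) (Fin 2 ⊕ κ) (ZMod 4) := M.submatrix e e
    have hP : P.det = M.det := Matrix.det_submatrix_equiv_self e M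
    let A : Matrix (Fin 2) (Fin 2) (ZMod 4) := !![M i i, M i j; M i j, M j j]
    let A' : Matrix (Fin 2) (Fin 2) (ZMod 4) := !![-M j j, M i j; M i j, -M i i]
    have hji : M j i = M i j := hs.apply i j
    have key : ∀ p q u : ZMod 4, 2 * p = 0 → 2 * q = 0 → 2 * u ≠ 0 →
        p * q - u * u = -1 := by decide
    have hk := key _ _ _ (hd i) (hd j) hij
    have hA : P.toBlocks₁₁ = A := by
      ext a b
      fin_cases a <;> fin_cases b <;> simp [P, A, toBlocks₁₁, e0, e1, hji]
    have hAdet : A.det = -1 := by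
      simp only [A, Matrix.det_fin_two_of]; exact hk
    have hAA : A' * A = 1 := by
      ext a b
      fin_cases a <;> fin_cases b <;> simp [A, A', Matrix.mul_apply] <;> first | ring1 | linear_combination -hk
    have hAA' : A * A' = 1 := _root_.mul_eq_one_comm.mp hAA
    let B : Matrix (Fin 2) κ (ZMod 4) := P.toBlocks₁₂
    have hC : P.toBlocks₂₁ = Bᵀ := by
      ext a b
      simp only [toBlocks₂₁, B, toBlocks₁₂, P, of_apply, transpose_apply, submatrix_apply]
      exact hs.apply _ _
    let D := P.toBlocks₂₂
    have hPb : P = fromBlocks A B Bᵀ D := by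
      rw [← hA, ← hC]; exact (fromBlocks_toBlocks P).symm
    let _ : Invertible A := ⟨A', hAA, hAA'⟩
    have hdet : M.det = - (D - Bᵀ * A' * B).det := by
      rw [← hP, hPb, Matrix.det_fromBlocks₁₁, hAdet]
      simp only [neg_one_mul]
      rfl
    have hDs : Dᵀ = D := by
      ext a b
      exact hs.apply _ _
    have hA's : A'ᵀ = A' := by
      ext a b
      fin_cases a <;> fin_cases b <;> simp [A']
    have hSs : (D - Bᵀ * A' * B).IsSymm := by
      unfold Matrix.IsSymm
      simp only [transpose_sub, transpose_mul, transpose_transpose, hDs, hA's, Matrix.mul_assoc]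
    have hSd : ∀ k, 2 * (D - Bᵀ * A' * B) k k = 0 := by
      intro k
      have h1 : 2 * D k k = 0 := hd _
      have h4 : (4 : ZMod 4) = 0 := by decide
      simp only [Matrix.sub_apply, Matrix.mul_apply, Fin.sum_univ_two, transpose_apply, A', of_apply,
        cons_val', cons_val_zero, cons_val_one, cons_val_fin_one]
      linear_combination h1 + (B 0 k)^2 * hd j + (B 1 k)^2 * hd i - (B 0 k * M i j * B 1 k) * h4
    obtain ⟨o, v⟩ := ih (Fintype.card κ) (by omega) κ _ rfl hSs hSd
    rw [hdet]
    constructor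
    · intro hn
      have := o (by rw [← hcard] at hn; grind)
      rw [mul_neg, this, neg_zero]
    · intro hn
      have := v (by rw [← hcard] at hn; grind)
      generalize (D - Bᵀ * A' * B).det = d at this
      revert d
      decide

/-- Let `M` be a symmetric integral `n × n` matrix with even diagonal entries. If
`det M = ±1` then `n` is even, and if `det M = ±2` then `n` is odd. -/
theorem statement6 (n : ℕ) (hn : 1 ≤ n) (M : Matrix (Fin n) (Fin n) ℤ)
    (hsym : M.IsSymm) (hdiag : ∀ i, Even (M i i)) :
    ((M.det = 1 ∨ M.det = -1) → Even n) ∧ ((M.det = 2 ∨ M.det = -2) → Odd n) := by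
  have h4 : (4 : ZMod 4) = 0 := by decide
  obtain ⟨o, v⟩ := aux_main n (Fin n) (M.map (Int.castRingHom (ZMod 4))) (by simp)
    (hsym.map _) (by
      intro i
      obtain ⟨r, hr⟩ := hdiag i
      simp only [Matrix.map_apply, hr, map_add]
      linear_combination (Int.castRingHom (ZMod 4) r) * h4)
  have hd : (M.map (Int.castRingHom (ZMod 4))).det = ((M.det : ℤ) : ZMod 4) := by
    have := (Int.castRingHom (ZMod 4)).map_det M
    simpa [RingHom.mapMatrix_apply] using this.symm
  rw [hd] at o v
  constructor
  · intro h
    by_contra hc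
    have := o (Nat.not_even_iff_odd.mp hc)
    rcases h with h | h <;> rw [h] at this <;> revert this <;> decide
  · intro h
    by_contra hc
    have := v (Nat.not_odd_iff_even.mp hc)
    rcases h with h | h <;> rw [h] at this <;> revert this <;> decide
end

section
/- For every odd positive integer n, the real number (1/12)·( n + 3·sin(nπ/2) + 8·sin(nπ/3)/sin(π/3) ) equals ⌈n/12⌉ if n ≡ 1, 7, or 9 (mod 12), and equals ⌊n/12⌋ if n ≡ 3, 5, or 11 (mod 12). -/
theorem aux_key (k : ℕ) (r : ℝ) (a b c : ℝ) (h2 : Real.sin (r * Real.pi / 2) = a)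
    (h3 : Real.sin (r * Real.pi / 3) = b * Real.sin (Real.pi / 3))
    (hc : r + 3 * a + 8 * b = c) :
    (1 / 12 : ℝ) * ((12 * (k : ℝ) + r) + 3 * Real.sin ((12 * (k : ℝ) + r) * Real.pi / 2)
          + 8 * Real.sin ((12 * (k : ℝ) + r) * Real.pi / 3) / Real.sin (Real.pi / 3))
        = k + c / 12 := by
  have e2 : (12 * (k : ℝ) + r) * Real.pi / 2
      = r * Real.pi / 2 + ((3 * k : ℕ) : ℝ) * (2 * Real.pi) := by push_cast; ring
  have e3 : (12 * (k : ℝ) + r) * Real.pi / 3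
      = r * Real.pi / 3 + ((2 * k : ℕ) : ℝ) * (2 * Real.pi) := by push_cast; ring
  have hs : Real.sin (Real.pi / 3) ≠ 0 := by
    rw [Real.sin_pi_div_three]; positivity
  rw [e2, e3, Real.sin_add_nat_mul_two_pi, Real.sin_add_nat_mul_two_pi, h2, h3, ← hc]
  field_simp
  ring

theorem aux_ceil (k : ℕ) (r : ℝ) (h0 : 0 < r) (h1 : r ≤ 12) :
    ⌈(12 * (k : ℝ) + r) / 12⌉ = (k : ℤ) + 1 := by
  rw [Int.ceil_eq_iff]; push_cast; constructor <;> linarith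

theorem aux_floor (k : ℕ) (r : ℝ) (h0 : 0 ≤ r) (h1 : r < 12) :
    ⌊(12 * (k : ℝ) + r) / 12⌋ = (k : ℤ) := by
  rw [Int.floor_eq_iff]; push_cast; constructor <;> linarith

theorem aux_p1 (j : ℕ) : Real.sin ((4 * (j : ℝ) + 1) * Real.pi / 2) = 1 := by
  rw [show (4 * (j : ℝ) + 1) * Real.pi / 2 = Real.pi / 2 + (j : ℝ) * (2 * Real.pi) by ring,
    Real.sin_add_nat_mul_two_pi, Real.sin_pi_div_two]

theorem aux_p3 (j : ℕ) : Real.sin ((4 * (j : ℝ) + 3) * Real.pi / 2) = -1 := by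
  rw [show (4 * (j : ℝ) + 3) * Real.pi / 2
      = (Real.pi / 2 + Real.pi) + (j : ℝ) * (2 * Real.pi) by ring,
    Real.sin_add_nat_mul_two_pi, Real.sin_add_pi, Real.sin_pi_div_two]

theorem aux_q1 (j : ℕ) :
    Real.sin ((6 * (j : ℝ) + 1) * Real.pi / 3) = 1 * Real.sin (Real.pi / 3) := by
  rw [show (6 * (j : ℝ) + 1) * Real.pi / 3 = Real.pi / 3 + (j : ℝ) * (2 * Real.pi) by ring,
    Real.sin_add_nat_mul_two_pi, one_mul]

theorem aux_q3 (j : ℕ) :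
    Real.sin ((6 * (j : ℝ) + 3) * Real.pi / 3) = 0 * Real.sin (Real.pi / 3) := by
  rw [show (6 * (j : ℝ) + 3) * Real.pi / 3 = Real.pi + (j : ℝ) * (2 * Real.pi) by ring,
    Real.sin_add_nat_mul_two_pi, zero_mul, Real.sin_pi]

theorem aux_q5 (j : ℕ) :
    Real.sin ((6 * (j : ℝ) + 5) * Real.pi / 3) = (-1) * Real.sin (Real.pi / 3) := by
  rw [show (6 * (j : ℝ) + 5) * Real.pi / 3
      = -(Real.pi / 3) + ((j + 1 : ℕ) : ℝ) * (2 * Real.pi) by push_cast; ring,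
    Real.sin_add_nat_mul_two_pi, Real.sin_neg]
  ring

/-- For every odd positive integer `n`, the real number
`(1/12) (n + 3 sin(nπ/2) + 8 sin(nπ/3)/sin(π/3))` equals `⌈n/12⌉` if
`n ≡ 1, 7, 9 (mod 12)`, and equals `⌊n/12⌋` if `n ≡ 3, 5, 11 (mod 12)`. -/
theorem statement7 (n : ℕ) (hpos : 0 < n) (hodd : Odd n) :
    (n % 12 = 1 ∨ n % 12 = 7 ∨ n % 12 = 9 →
      (1 / 12 : ℝ) * ((n : ℝ) + 3 * Real.sin ((n : ℝ) * Real.pi / 2)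
          + 8 * Real.sin ((n : ℝ) * Real.pi / 3) / Real.sin (Real.pi / 3))
        = ((⌈(n : ℝ) / 12⌉ : ℤ) : ℝ)) ∧
    (n % 12 = 3 ∨ n % 12 = 5 ∨ n % 12 = 11 →
      (1 / 12 : ℝ) * ((n : ℝ) + 3 * Real.sin ((n : ℝ) * Real.pi / 2)
          + 8 * Real.sin ((n : ℝ) * Real.pi / 3) / Real.sin (Real.pi / 3))
        = ((⌊(n : ℝ) / 12⌋ : ℤ) : ℝ)) := by
  refine ⟨?_, ?_⟩
  · rintro (h | h | h)
    · obtain ⟨k, hk⟩ : ∃ k, n = 12 * k + 1 := ⟨n / 12, by omega⟩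
      have hn : (n : ℝ) = 12 * (k : ℝ) + 1 := by
        exact_mod_cast hk
      rw [hn, aux_key k 1 1 1 12
        (by have := aux_p1 0; norm_num at this ⊢ <;> exact this)
        (by have := aux_q1 0; norm_num at this ⊢ <;> exact this) (by norm_num),
        aux_ceil _ _ (by norm_num) (by norm_num)]
      push_cast; ring
    · obtain ⟨k, hk⟩ : ∃ k, n = 12 * k + 7 := ⟨n / 12, by omega⟩
      have hn : (n : ℝ) = 12 * (k : ℝ) + 7 := by
        exact_mod_cast hk
      rw [hn, aux_key k 7 (-1) 1 12
        (by have := aux_p3 1; norm_num at this ⊢ <;> exact this)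
        (by have := aux_q1 1; norm_num at this ⊢ <;> exact this) (by norm_num),
        aux_ceil _ _ (by norm_num) (by norm_num)]
      push_cast; ring
    · obtain ⟨k, hk⟩ : ∃ k, n = 12 * k + 9 := ⟨n / 12, by omega⟩
      have hn : (n : ℝ) = 12 * (k : ℝ) + 9 := by
        exact_mod_cast hk
      rw [hn, aux_key k 9 1 0 12
        (by have := aux_p1 2; norm_num at this ⊢ <;> exact this)
        (by have := aux_q3 1; norm_num at this ⊢ <;> exact this) (by norm_num),
        aux_ceil _ _ (by norm_num) (by norm_num)]
      push_cast; ring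
  · rintro (h | h | h)
    · obtain ⟨k, hk⟩ : ∃ k, n = 12 * k + 3 := ⟨n / 12, by omega⟩
      have hn : (n : ℝ) = 12 * (k : ℝ) + 3 := by
        exact_mod_cast hk
      rw [hn, aux_key k 3 (-1) 0 0
        (by have := aux_p3 0; norm_num at this ⊢ <;> exact this)
        (by have := aux_q3 0; norm_num at this ⊢ <;> exact this) (by norm_num),
        aux_floor _ _ (by norm_num) (by norm_num)]
      push_cast; ring
    · obtain ⟨k, hk⟩ : ∃ k, n = 12 * k + 5 := ⟨n / 12, by omega⟩
      have hn : (n : ℝ) = 12 * (k : ℝ) + 5 := by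
        exact_mod_cast hk
      rw [hn, aux_key k 5 1 (-1) 0
        (by have := aux_p1 1; norm_num at this ⊢ <;> exact this)
        (by have := aux_q5 0; norm_num at this ⊢ <;> exact this) (by norm_num),
        aux_floor _ _ (by norm_num) (by norm_num)]
      push_cast; ring
    · obtain ⟨k, hk⟩ : ∃ k, n = 12 * k + 11 := ⟨n / 12, by omega⟩
      have hn : (n : ℝ) = 12 * (k : ℝ) + 11 := by
        exact_mod_cast hk
      rw [hn, aux_key k 11 (-1) (-1) 0
        (by have := aux_p3 2; norm_num at this ⊢ <;> exact this)
        (by have := aux_q5 1; norm_num at this ⊢ <;> exact this) (by norm_num),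
        aux_floor _ _ (by norm_num) (by norm_num)]
      push_cast; ring
end
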